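/- arXiv:2407.06550 — 2 statements merged into one kernel-verified Lean document; each statement's English description precedes it below -/
import Mathlib

section
/- Assume m ≥ 2 or q_1 ≥ 3. The non-unital ℂ-subalgebra of Mat_{X^n}(ℂ) generated by the matrices {L_τ(G_•) : τ ∈ C(m,n)} ∪ {L_τ(G_•^*) : τ ∈ C(m,n)} is commutative, and the matrices {L_μ(G_•)·L_λ(G_•^*) : (λ,μ) ∈ Ω(m,n)} form a ℂ-basis of it; in particular this subalgebra has dimension |Ω(m,n)|. -/
/-!
The algebra turns out to be spanned by orthogonal idempotents.

**One factor.** On each coordinate `ℤ/qℤ` let `z` be the projection onto `δ_0` and `e = J̃` the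
projection onto the constants. They satisfy `zez = z/q` and `eze = e/q` (`IdemPair`), and nothing
else is used about them apart from some nonvanishing. With
`K = (1 - 1/q)⁻¹ (1-z)e(1-z)` and `R = (1 - 1/q)⁻¹ (1-e)z(1-e)` (`compr`), the matrices are

* `G*_i = (1 ⊗ ⋯ ⊗ 1 ⊗ (1-z) - e ⊗ ⋯ ⊗ e ⊗ K) ⊗ z ⊗ ⋯ ⊗ z`, the special factor being the `i`-th;
* `G_j = e ⊗ ⋯ ⊗ e ⊗ ((1-e) ⊗ 1 ⊗ ⋯ ⊗ 1 - R ⊗ z ⊗ ⋯ ⊗ z)`, the special factor being the `t`-th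
  with `t = m - j + 1`.

Each family consists of orthogonal idempotents, and multiplying factor by factor shows that `G_j`
and `G*_i` commute. Their product is `0` if `i < t`; it is `e ⊗ ⋯ ⊗ e ⊗ N ⊗ z ⊗ ⋯ ⊗ z` if `i = t`,
where `N = 1 - z - K = 1 - e - R` (`IdemPair.compr_swap`) has rank `q_i - 2`; and it is
`E_j E*_i ≠ 0` if `i > t`. So `G_j G*_i ≠ 0` exactly for `(i, j) ∈ Λ(m)`
(`gmat_mul_gmatStar_ne_zero`). Finally `∑ G_j = ∑ G*_i` (`sum_tenG_eq`), both sums being the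
projection onto the orthogonal complement of the primary module.

**`n` factors.** `L_τ(M_•)` is the sum of the Kronecker products `M_{f(1)} ⊗ ⋯ ⊗ M_{f(n)}` over the
`f` of type `τ`. Hence `{L_μ(G_•)}` and `{L_λ(G*_•)}` are again families of orthogonal idempotents,
commuting with each other and having the same sum, and `L_μ(G_•) L_λ(G*_•)` is nonzero exactly when
some pair `(f, g)` of types `(μ, λ)` has all `(g(k), f(k))` in `Λ(m)`. The joint fibre sizes of such
a pair form an element of `Θ(λ, μ)`, and every element arises so (`Lmat_mul_ne_zero`). The nonzero
products are therefore orthogonal idempotents, so linearly independent, and their span is closed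
under multiplication. It contains the generators: multiplying `L_μ(G_•)` by the common sum
`∑_λ L_λ(G*_•)` leaves it unchanged (`basis_of_idempotents`).
-/

open Matrix BigOperators

noncomputable section

namespace OHS

variable (m : ℕ) (q : ℕ → ℕ)

/-- The vertex set `X = ∏_{s=1}^m ℤ/q_sℤ` of `𝔛(m,1)`. -/
abbrev Vtx : Type := (i : Fin m) → ZMod (q ((i : ℕ) + 1))

/-- The adjacency matrices `A_j` of `𝔛(m,1)`, given entrywise
(the Kronecker product `J_1⊗⋯⊗J_{j−1}⊗(J_j−I_j)⊗I_{j+1}⊗⋯⊗I_m`, and `A_0` the identity). -/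
def AdjOne (j : ℕ) : Matrix (Vtx m q) (Vtx m q) ℂ :=
  Matrix.of fun x y => ∏ i : Fin m,
    if (i : ℕ) + 1 < j then (1 : ℂ)
    else if (i : ℕ) + 1 = j then (if x i = y i then 0 else 1)
    else if x i = y i then 1 else 0

/-- The primitive idempotents `E_j` of `𝔛(m,1)`, given entrywise
(`E_0 = J̃_1⊗⋯⊗J̃_m`, `E_j = J̃_1⊗⋯⊗J̃_{m−j}⊗(I_{m−j+1}−J̃_{m−j+1})⊗I_{m−j+2}⊗⋯⊗I_m`). -/
def IdemOne (j : ℕ) : Matrix (Vtx m q) (Vtx m q) ℂ :=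
  Matrix.of fun x y => ∏ i : Fin m,
    if (i : ℕ) + 1 < m - j + 1 then ((q ((i : ℕ) + 1) : ℂ))⁻¹
    else if (i : ℕ) + 1 = m - j + 1 then
      (if x i = y i then (1 : ℂ) else 0) - ((q ((i : ℕ) + 1) : ℂ))⁻¹
    else if x i = y i then 1 else 0

/-- The dual primitive idempotents `E*_j` w.r.t. the base point `0`:
the diagonal matrix whose `(y,y)` entry is the `(0,y)` entry of `A_j`. -/
def DualIdemOne (j : ℕ) : Matrix (Vtx m q) (Vtx m q) ℂ :=
  Matrix.diagonal fun y => AdjOne m q j 0 y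

/-- The valency `k_j`: `k_0 = 1` and `k_j = (q_j−1)∏_{s<j} q_s`. -/
def valency (j : ℕ) : ℕ :=
  ∏ i : Fin m,
    if (i : ℕ) + 1 < j then q ((i : ℕ) + 1)
    else if (i : ℕ) + 1 = j then q ((i : ℕ) + 1) - 1
    else 1

/-- The multiplicity `m_j`: `m_0 = 1` and `m_j = (q_{m−j+1}−1)∏_{s=m−j+2}^m q_s`. -/
def multiplicity (j : ℕ) : ℕ :=
  ∏ i : Fin m,
    if m - j + 1 < (i : ℕ) + 1 then q ((i : ℕ) + 1)
    else if (i : ℕ) + 1 = m - j + 1 then q ((i : ℕ) + 1) - 1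
    else 1

section WithFintype

variable [∀ i, NeZero (q i)]

/-- `F_j = (|X|/m_j)·E_j E*_0 E_j`. -/
def Fmat (j : ℕ) : Matrix (Vtx m q) (Vtx m q) ℂ :=
  ((Fintype.card (Vtx m q) : ℂ) / (multiplicity m q j : ℂ)) •
    (IdemOne m q j * DualIdemOne m q 0 * IdemOne m q j)

/-- `F*_j = (|X|/k_j)·E*_j E_0 E*_j`. -/
def FmatStar (j : ℕ) : Matrix (Vtx m q) (Vtx m q) ℂ :=
  ((Fintype.card (Vtx m q) : ℂ) / (valency m q j : ℂ)) •
    (DualIdemOne m q j * IdemOne m q 0 * DualIdemOne m q j)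

/-- `G_j = E_j − F_j`. -/
def Gmat (j : ℕ) : Matrix (Vtx m q) (Vtx m q) ℂ := IdemOne m q j - Fmat m q j

/-- `G*_j = E*_j − F*_j`. -/
def GmatStar (j : ℕ) : Matrix (Vtx m q) (Vtx m q) ℂ :=
  DualIdemOne m q j - FmatStar m q j

/-- The Terwilliger algebra of `𝔛(m,1)` w.r.t. the base point `0`: the unital
ℂ-subalgebra generated by the adjacency matrices and the dual idempotents. -/
def Ter1 : Subalgebra ℂ (Matrix (Vtx m q) (Vtx m q) ℂ) :=
  Algebra.adjoin ℂ
    ({M | ∃ j ≤ m, M = AdjOne m q j} ∪ {M | ∃ j ≤ m, M = DualIdemOne m q j})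

end WithFintype

/-- `Λ(m)`: pairs `(i,j)` with `1 ≤ i,j ≤ m` and either `i+j > m+1`,
or `i+j = m+1` and `q_i ≥ 3`. -/
def LamSet : Finset (ℕ × ℕ) :=
  ((Finset.Icc 1 m) ×ˢ (Finset.Icc 1 m)).filter
    fun p => m + 1 < p.1 + p.2 ∨ (p.1 + p.2 = m + 1 ∧ 3 ≤ q p.1)

variable (n : ℕ)

/-- The largest (1-based) position where `v` is nonzero; `0` if `v = 0`. -/
def level (v : Vtx m q) : ℕ :=
  (Finset.univ.filter fun i : Fin m => v i ≠ 0).sup fun i => (i : ℕ) + 1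

/-- `I(m,n)`: tuples `(λ_0,…,λ_m)` of naturals summing to `n`. -/
def ShapeSet : Finset (Fin (m + 1) → ℕ) :=
  (Fintype.piFinset fun _ : Fin (m + 1) => Finset.range (n + 1)).filter
    fun lam => ∑ j, lam j = n

/-- `x ∈ X^n` has shape `λ`. -/
def hasShape (x : Fin n → Vtx m q) (lam : Fin (m + 1) → ℕ) : Prop :=
  ∀ j : Fin (m + 1),
    (Finset.univ.filter fun i : Fin n => level m q (x i) = (j : ℕ)).card = lam j

instance (x : Fin n → Vtx m q) (lam : Fin (m + 1) → ℕ) :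
    Decidable (hasShape m q n x lam) := by
  unfold hasShape; infer_instance

/-- The `λ`-th adjacency matrix `𝐀_λ` of the ordered Hamming scheme `𝔛(m,n)`. -/
def AdjN (lam : Fin (m + 1) → ℕ) :
    Matrix (Fin n → Vtx m q) (Fin n → Vtx m q) ℂ :=
  Matrix.of fun x y => if hasShape m q n (fun i => x i - y i) lam then 1 else 0

/-- The `λ`-th dual primitive idempotent `𝐄*_λ` of `𝔛(m,n)` (base point `0`). -/
def DualIdemN (lam : Fin (m + 1) → ℕ) :
    Matrix (Fin n → Vtx m q) (Fin n → Vtx m q) ℂ :=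
  Matrix.diagonal fun y => if hasShape m q n y lam then 1 else 0

/-- `L_λ(M_•)`: entrywise, the sum over functions `f` with `#f⁻¹(j) = λ_j` of
`∏_i (M_{f(i)})_{x_i,y_i}`. -/
def Lmat {ι : Type*} [Fintype ι] [DecidableEq ι]
    (M : ι → Matrix (Vtx m q) (Vtx m q) ℂ) (lam : ι → ℕ) :
    Matrix (Fin n → Vtx m q) (Fin n → Vtx m q) ℂ :=
  Matrix.of fun x y =>
    ∑ f ∈ Finset.univ.filter
        (fun f : Fin n → ι =>
          ∀ j, (Finset.univ.filter fun i => f i = j).card = lam j),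
      ∏ i, M (f i) (x i) (y i)

/-- The Kronecker product `M_1⊗⋯⊗M_n`. -/
def kron (M : Fin n → Matrix (Vtx m q) (Vtx m q) ℂ) :
    Matrix (Fin n → Vtx m q) (Fin n → Vtx m q) ℂ :=
  Matrix.of fun x y => ∏ i, M i (x i) (y i)

section WithFintype2

variable [∀ i, NeZero (q i)]

/-- The Terwilliger algebra `𝐓(m,n)` of `𝔛(m,n)` w.r.t. the zero base point. -/
def TerN : Subalgebra ℂ (Matrix (Fin n → Vtx m q) (Fin n → Vtx m q) ℂ) :=
  Algebra.adjoin ℂ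
    ({M | ∃ lam ∈ ShapeSet m n, M = AdjN m q n lam} ∪
      {M | ∃ lam ∈ ShapeSet m n, M = DualIdemN m q n lam})

end WithFintype2

/-- The entry `P_i(j; r)` of the first eigenmatrix for the parameter sequence `r`. -/
def PEnt (r : ℕ → ℕ) (i j : ℕ) : ℂ :=
  if i + j < m + 1 then (valency m r i : ℂ)
  else if i + j = m + 1 then -(valency m r i : ℂ) / ((r i : ℂ) - 1)
  else 0

/-- The multivariate Krawtchouk polynomial `K_μ(λ; r_1,…,r_m)`: the coefficient of
`z^μ` in `∏_{j=0}^m (Σ_{i=0}^m P_i(j;r) z_i)^{λ_j}`. -/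
def Kraw (r : ℕ → ℕ) (mu lam : Fin (m + 1) → ℕ) : ℂ :=
  MvPolynomial.coeff (Finsupp.equivFunOnFinite.symm mu)
    (∏ j : Fin (m + 1),
      (∑ i : Fin (m + 1),
        MvPolynomial.C (PEnt m r (i : ℕ) (j : ℕ)) * MvPolynomial.X i) ^ lam j)

/-- `C(m,n)`: tuples `(τ_1,…,τ_m)` of naturals summing to `n`. -/
def Ctuples : Finset (Fin m → ℕ) :=
  (Fintype.piFinset fun _ : Fin m => Finset.range (n + 1)).filter
    fun t => ∑ i, t i = n

/-- `Θ(λ,μ)`: nonnegative-integer `m×m` matrices supported on `Λ(m)` with row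
sums `λ` and column sums `μ`. -/
def ThetaSet (lam mu : Fin m → ℕ) : Finset (Fin m → Fin m → ℕ) :=
  (Fintype.piFinset fun _ : Fin m =>
      Fintype.piFinset fun _ : Fin m => Finset.range (n + 1)).filter
    fun c =>
      (∀ i j : Fin m, ((i : ℕ) + 1, (j : ℕ) + 1) ∉ LamSet m q → c i j = 0) ∧
      (∀ i, ∑ j, c i j = lam i) ∧ (∀ j, ∑ i, c i j = mu j)

/-- `Ω(m,n)`: the pairs `(λ,μ)` with `Θ(λ,μ) ≠ ∅`. -/
def OmegaSet : Finset ((Fin m → ℕ) × (Fin m → ℕ)) :=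
  ((Ctuples m n) ×ˢ (Ctuples m n)).filter
    fun p => (ThetaSet m q n p.1 p.2).Nonempty

/-- The permutation matrix `P_σ` of the coordinate permutation
`(x_1,…,x_n) ↦ (x_{σ⁻¹(1)},…,x_{σ⁻¹(n)})` of `X^n`. -/
def permMat (σ : Equiv.Perm (Fin n)) :
    Matrix (Fin n → Vtx m q) (Fin n → Vtx m q) ℂ :=
  Matrix.of fun x y => if x = y ∘ ⇑σ⁻¹ then 1 else 0


/-! ### One coordinate -/

/-- Two idempotents `z`, `e` of a ℂ-algebra satisfying `zez = cz` and `eze = ce` with `c ≠ 1`.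
The case of interest is `z` the projection onto `δ_0`, `e` the projection onto the constants, and
`c = 1/q`; the relations are symmetric in `z` and `e`. -/
structure IdemPair {A : Type*} [Ring A] [Algebra ℂ A] (c : ℂ) (z e : A) : Prop where
  zz : z * z = z
  ee : e * e = e
  zez : z * e * z = c • z
  eze : e * z * e = c • e
  hc : 1 - c ≠ 0

/-- The normalised compression of `e` to the complement of `z`. For the pair of interest it is the
projection onto the indicator vector of the nonzero elements; with `z` and `e` exchanged it is the
projection onto `δ_0 - 1/q`. -/
def compr {A : Type*} [Ring A] [Algebra ℂ A] (c : ℂ) (z e : A) : A :=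
  (1 - c)⁻¹ • ((1 - z) * e * (1 - z))

section Coord

variable {A : Type*} [Ring A] [Algebra ℂ A] {c : ℂ} {z e : A}

lemma IdemPair.symm (h : IdemPair c z e) : IdemPair c e z := ⟨h.ee, h.zz, h.eze, h.zez, h.hc⟩

lemma IdemPair.z_one_sub (h : IdemPair c z e) : z * (1 - z) = 0 := by
  rw [mul_sub, h.zz, mul_one, sub_self]

lemma IdemPair.one_sub_z (h : IdemPair c z e) : (1 - z) * z = 0 := by
  rw [sub_mul, h.zz, one_mul, sub_self]

lemma IdemPair.one_sub_sq (h : IdemPair c z e) : (1 - z) * (1 - z) = 1 - z := by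
  rw [sub_mul, h.z_one_sub, one_mul, sub_zero]

lemma IdemPair.z_compr (h : IdemPair c z e) : z * compr c z e = 0 := by
  rw [compr, mul_smul_comm, ← mul_assoc, ← mul_assoc, h.z_one_sub]; simp

lemma IdemPair.compr_z (h : IdemPair c z e) : compr c z e * z = 0 := by
  rw [compr, smul_mul_assoc, mul_assoc, h.one_sub_z]; simp

lemma IdemPair.one_sub_compr (h : IdemPair c z e) : (1 - z) * compr c z e = compr c z e := by
  rw [sub_mul, h.z_compr, one_mul, sub_zero]

lemma IdemPair.compr_one_sub (h : IdemPair c z e) : compr c z e * (1 - z) = compr c z e := by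
  rw [mul_sub, h.compr_z, mul_one, sub_zero]

lemma IdemPair.e_mid (h : IdemPair c z e) : e * (1 - z) * e = (1 - c) • e := by
  rw [mul_sub, sub_mul, mul_one, h.ee, h.eze, sub_smul, one_smul]

lemma IdemPair.compr_e (h : IdemPair c z e) : compr c z e * e = (1 - z) * e := by
  rw [compr, smul_mul_assoc, mul_assoc, mul_assoc, ← mul_assoc e, h.e_mid, mul_smul_comm,
    smul_smul, inv_mul_cancel₀ h.hc, one_smul]

lemma IdemPair.e_compr (h : IdemPair c z e) : e * compr c z e = e * (1 - z) := by
  rw [compr, mul_smul_comm, ← mul_assoc, ← mul_assoc, h.e_mid, smul_mul_assoc,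
    smul_smul, inv_mul_cancel₀ h.hc, one_smul]

lemma IdemPair.compr_sq (h : IdemPair c z e) : compr c z e * compr c z e = compr c z e := by
  nth_rw 2 [compr]
  rw [mul_smul_comm, ← mul_assoc, ← mul_assoc, h.compr_one_sub, h.compr_e, compr]

/-- Both sides are the projection onto the span of `δ_0` and the constants. -/
lemma IdemPair.compr_swap (h : IdemPair c z e) :
    1 - e - compr c e z = 1 - z - compr c z e := by
  have h1 : (1 - z) * e * (1 - z) = e - z * e - e * z + c • z := by
    rw [← h.zez]; noncomm_ring
  have h2 : (1 - e) * z * (1 - e) = z - e * z - z * e + c • e := by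
    rw [← h.eze]; noncomm_ring
  have h3 : (1 - c) • (compr c z e - compr c e z) = (1 - c) • (e - z) := by
    rw [compr, compr, h1, h2, smul_sub, smul_smul, smul_smul, mul_inv_cancel₀ h.hc,
      one_smul, one_smul, sub_smul, one_smul, smul_sub]
    abel
  have h4 := smul_right_injective A h.hc h3
  rw [sub_eq_sub_iff_add_eq_add] at h4 ⊢
  rw [sub_add_eq_add_sub, sub_add_eq_add_sub, add_sub_assoc, add_sub_assoc, add_right_inj,
    sub_eq_sub_iff_add_eq_add, h4, add_comm]

lemma IdemPair.resid_sq (h : IdemPair c z e) :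
    (1 - z - compr c z e) * (1 - z - compr c z e) = 1 - z - compr c z e := by
  rw [sub_mul, mul_sub (1 - z), mul_sub (compr c z e), h.one_sub_sq, h.one_sub_compr,
    h.compr_one_sub, h.compr_sq, sub_self, sub_zero]

end Coord

/-! ### Kronecker products over a finite index set -/

/-- The Kronecker product of a family of square matrices; `kron` is the case of a constant
family of index types. -/
def tens {ι : Type*} [Fintype ι] {α : ι → Type*} (M : ∀ i, Matrix (α i) (α i) ℂ) :
    Matrix (∀ i, α i) (∀ i, α i) ℂ :=
  Matrix.of fun x y => ∏ i, M i (x i) (y i)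

section Tens

variable {ι : Type*} [Fintype ι] {α : ι → Type*}

lemma tens_eq_zero {M : ∀ i, Matrix (α i) (α i) ℂ} (i : ι) (h : M i = 0) : tens M = 0 := by
  ext x y
  simp only [tens, Matrix.of_apply, Matrix.zero_apply]
  exact Finset.prod_eq_zero (Finset.mem_univ i) (by simp [h])

lemma tens_ne_zero {M : ∀ i, Matrix (α i) (α i) ℂ} (h : ∀ i, M i ≠ 0) : tens M ≠ 0 := by
  have h' : ∀ i, ∃ a b, M i a b ≠ 0 := by
    intro i
    by_contra! hc
    exact h i (by ext a b; exact hc a b)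
  choose a b hab using h'
  intro h0
  have := congrFun (congrFun h0 a) b
  simp only [tens, Matrix.of_apply, Matrix.zero_apply] at this
  exact Finset.prod_ne_zero_iff.2 (fun i _ => hab i) this

lemma tens_smul (r : ι → ℂ) (M : ∀ i, Matrix (α i) (α i) ℂ) :
    (∏ i, r i) • tens M = tens fun i => r i • M i := by
  ext x y
  simp [tens, Finset.prod_mul_distrib]

lemma tens_diagonal [∀ i, DecidableEq (α i)] (D : ∀ i, α i → ℂ) :
    (Matrix.diagonal fun x => ∏ i, D i (x i)) = tens fun i => Matrix.diagonal (D i) := by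
  ext x y
  simp only [tens, Matrix.of_apply]
  by_cases h : x = y
  · subst h; simp
  · obtain ⟨i, hi⟩ := Function.ne_iff.1 h
    rw [Matrix.diagonal_apply_ne _ h]
    exact (Finset.prod_eq_zero (Finset.mem_univ i) (Matrix.diagonal_apply_ne (D i) hi)).symm

lemma tens_one [∀ i, DecidableEq (α i)] :
    tens (fun i => (1 : Matrix (α i) (α i) ℂ)) = 1 := by
  simpa [Matrix.diagonal_one] using (tens_diagonal (α := α) fun _ _ => (1 : ℂ)).symm

variable [DecidableEq ι]

lemma tens_mul [∀ i, Fintype (α i)] (M N : ∀ i, Matrix (α i) (α i) ℂ) :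
    tens M * tens N = tens fun i => M i * N i := by
  ext x y
  simp only [tens, Matrix.mul_apply, Matrix.of_apply, ← Finset.prod_mul_distrib]
  rw [Finset.prod_univ_sum, Fintype.piFinset_univ]

/-- Linearity of the Kronecker product in the factor at `k`. -/
lemma tens_sub_at (k : ι) {M M₁ M₂ : ∀ i, Matrix (α i) (α i) ℂ}
    (h₁ : ∀ i, i ≠ k → M₁ i = M i) (h₂ : ∀ i, i ≠ k → M₂ i = M i)
    (hk : M₁ k - M₂ k = M k) : tens M₁ - tens M₂ = tens M := by
  ext x y
  simp only [tens, Matrix.of_apply, Matrix.sub_apply]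
  rw [Fintype.prod_eq_mul_prod_compl k, Fintype.prod_eq_mul_prod_compl k,
    Fintype.prod_eq_mul_prod_compl k, ← hk, Matrix.sub_apply, sub_mul]
  congr 1
  · congr 1
    exact Finset.prod_congr rfl fun i hi => by rw [h₁ i (by simpa using hi)]
  · congr 1
    exact Finset.prod_congr rfl fun i hi => by rw [h₂ i (by simpa using hi)]

end Tens

/-! ### The four families of Kronecker products -/

section Families

variable {m : ℕ} {α : Fin m → Type*} [∀ i, Fintype (α i)] [∀ i, DecidableEq (α i)]
  {c : Fin m → ℂ} (z e : ∀ i, Matrix (α i) (α i) ℂ)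

/-- The factors of `E*_{i+1}`. -/
def facEs (i s : Fin m) : Matrix (α s) (α s) ℂ :=
  if s < i then 1 else if s = i then 1 - z s else z s

/-- The factors of `F*_{i+1}`. -/
def facFs (c : Fin m → ℂ) (i s : Fin m) : Matrix (α s) (α s) ℂ :=
  if s < i then e s else if s = i then compr (c s) (z s) (e s) else z s

/-- The factors of `E_{m-t}`: the index `t` is the (zero-based) coordinate carrying `I - J̃`. -/
def facE (t s : Fin m) : Matrix (α s) (α s) ℂ :=
  if s < t then e s else if s = t then 1 - e s else 1

/-- The factors of `F_{m-t}`, indexed as in `facE`. -/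
def facF (c : Fin m → ℂ) (t s : Fin m) : Matrix (α s) (α s) ℂ :=
  if s < t then e s else if s = t then compr (c s) (e s) (z s) else z s

/-- `G*_{i+1}` as a difference of two Kronecker products. -/
def tenGs (c : Fin m → ℂ) (i : Fin m) : Matrix (∀ i, α i) (∀ i, α i) ℂ :=
  tens (facEs z i) - tens (facFs z e c i)

/-- `G_{m-t}` as a difference of two Kronecker products. -/
def tenG (c : Fin m → ℂ) (t : Fin m) : Matrix (∀ i, α i) (∀ i, α i) ℂ :=
  tens (facE e t) - tens (facF z e c t)

variable {z e} (h : ∀ i, IdemPair (c i) (z i) (e i))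

include h

lemma tenGs_sq (i : Fin m) : tenGs z e c i * tenGs z e c i = tenGs z e c i := by
  have h1 : (fun s => facEs z i s * facEs z i s) = facEs z i := by
    funext s
    simp only [facEs]; split_ifs <;> simp [(h s).zz, (h s).one_sub_sq]
  have h2 : (fun s => facEs z i s * facFs z e c i s) = facFs z e c i := by
    funext s
    simp only [facEs, facFs]; split_ifs <;> simp [(h s).zz, (h s).one_sub_compr]
  have h3 : (fun s => facFs z e c i s * facEs z i s) = facFs z e c i := by
    funext s
    simp only [facEs, facFs]; split_ifs <;> simp [(h s).zz, (h s).compr_one_sub]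
  have h4 : (fun s => facFs z e c i s * facFs z e c i s) = facFs z e c i := by
    funext s
    simp only [facFs]; split_ifs <;> simp [(h s).zz, (h s).ee, (h s).compr_sq]
  rw [tenGs, sub_mul, mul_sub, mul_sub, tens_mul, tens_mul, tens_mul, tens_mul, h1, h2, h3, h4]
  abel

lemma tenG_sq (t : Fin m) : tenG z e c t * tenG z e c t = tenG z e c t := by
  have h1 : (fun s => facE e t s * facE e t s) = facE e t := by
    funext s
    simp only [facE]; split_ifs <;> simp [(h s).ee, (h s).symm.one_sub_sq]
  have h2 : (fun s => facE e t s * facF z e c t s) = facF z e c t := by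
    funext s
    simp only [facE, facF]; split_ifs <;> simp [(h s).ee, (h s).symm.one_sub_compr]
  have h3 : (fun s => facF z e c t s * facE e t s) = facF z e c t := by
    funext s
    simp only [facE, facF]; split_ifs <;> simp [(h s).ee, (h s).symm.compr_one_sub]
  have h4 : (fun s => facF z e c t s * facF z e c t s) = facF z e c t := by
    funext s
    simp only [facF]; split_ifs <;> simp [(h s).zz, (h s).ee, (h s).symm.compr_sq]
  rw [tenG, sub_mul, mul_sub, mul_sub, tens_mul, tens_mul, tens_mul, tens_mul, h1, h2, h3, h4]
  abel

lemma tenGs_orth {i j : Fin m} (hij : i ≠ j) : tenGs z e c i * tenGs z e c j = 0 := by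
  rw [tenGs, tenGs, sub_mul, mul_sub, mul_sub, tens_mul, tens_mul, tens_mul, tens_mul]
  -- at the larger of the two coordinates one factor is `z` and the other is killed by `z`
  rcases lt_or_gt_of_ne hij with hl | hl
  · rw [tens_eq_zero j, tens_eq_zero j, tens_eq_zero j, tens_eq_zero j] <;>
      simp [facEs, facFs, hl.not_gt, hl.ne', (h j).z_one_sub, (h j).z_compr]
  · rw [tens_eq_zero i, tens_eq_zero i, tens_eq_zero i, tens_eq_zero i] <;>
      simp [facEs, facFs, hl.not_gt, hl.ne', (h i).one_sub_z, (h i).compr_z]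

lemma tenG_orth {i j : Fin m} (hij : i ≠ j) : tenG z e c i * tenG z e c j = 0 := by
  rw [tenG, tenG, sub_mul, mul_sub, mul_sub, tens_mul, tens_mul, tens_mul, tens_mul]
  -- at the smaller of the two coordinates one factor is `e` and the other is killed by `e`
  rcases lt_or_gt_of_ne hij with hl | hl
  · rw [tens_eq_zero i, tens_eq_zero i, tens_eq_zero i, tens_eq_zero i] <;>
      simp [facE, facF, hl, (h i).symm.one_sub_z, (h i).symm.compr_z]
  · rw [tens_eq_zero j, tens_eq_zero j, tens_eq_zero j, tens_eq_zero j] <;>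
      simp [facE, facF, hl, (h j).symm.z_one_sub, (h j).symm.z_compr]

lemma tenG_mul_tenGs_lt {i t : Fin m} (hl : i < t) :
    tenG z e c t * tenGs z e c i = 0 ∧ tenGs z e c i * tenG z e c t = 0 := by
  have key : ∀ s, s ≤ i → (facE e t s = e s ∧ facF z e c t s = e s) := fun s hs => by
    simp [facE, facF, lt_of_le_of_lt hs hl]
  have key2 : ∀ s, ¬ s ≤ i → facEs z i s = z s ∧ facFs z e c i s = z s := fun s hs => by
    simp [facEs, facFs, not_lt.2 (not_le.1 hs).le, (not_le.1 hs).ne']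
  have key3 : ∀ s, s ≤ i → (facEs z i s * e s = facFs z e c i s * e s ∧
      e s * facEs z i s = e s * facFs z e c i s) := fun s hs => by
    rcases hs.lt_or_eq with hs | rfl
    · simp [facEs, facFs, hs, (h s).ee]
    · simp [facEs, facFs, (h s).compr_e, (h s).e_compr]
  have h1 : (fun s => facE e t s * facEs z i s) = fun s => facE e t s * facFs z e c i s := by
    funext s
    by_cases hs : s ≤ i
    · rw [(key s hs).1, (key3 s hs).2]
    · rw [(key2 s hs).1, (key2 s hs).2]
  have h2 : (fun s => facF z e c t s * facEs z i s) =
      fun s => facF z e c t s * facFs z e c i s := by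
    funext s
    by_cases hs : s ≤ i
    · rw [(key s hs).2, (key3 s hs).2]
    · rw [(key2 s hs).1, (key2 s hs).2]
  have h3 : (fun s => facEs z i s * facE e t s) = fun s => facFs z e c i s * facE e t s := by
    funext s
    by_cases hs : s ≤ i
    · rw [(key s hs).1, (key3 s hs).1]
    · rw [(key2 s hs).1, (key2 s hs).2]
  have h4 : (fun s => facEs z i s * facF z e c t s) =
      fun s => facFs z e c i s * facF z e c t s := by
    funext s
    by_cases hs : s ≤ i
    · rw [(key s hs).2, (key3 s hs).1]
    · rw [(key2 s hs).1, (key2 s hs).2]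
  constructor
  · rw [tenGs, tenG, sub_mul, mul_sub, mul_sub, tens_mul, tens_mul, tens_mul, tens_mul, h1, h2]
    simp
  · rw [tenGs, tenG, sub_mul, mul_sub, mul_sub, tens_mul, tens_mul, tens_mul, tens_mul, h3, h4]
    abel

/-- The factors of `G_{m-t} G*_{i+1}` for `t < i`; the product equals `E_{m-t} E*_{i+1}`. -/
lemma tenG_mul_tenGs_gt {i t : Fin m} (hl : t < i) :
    tenG z e c t * tenGs z e c i = tens (fun s => facE e t s * facEs z i s) ∧
    tenGs z e c i * tenG z e c t = tens (fun s => facE e t s * facEs z i s) := by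
  have hc : (fun s => facEs z i s * facE e t s) = fun s => facE e t s * facEs z i s := by
    funext s
    rcases lt_or_ge s i with hs | hs
    · simp [facEs, hs]
    · simp [facE, (hl.trans_le hs).not_gt, (hl.trans_le hs).ne']
  constructor
  · rw [tenGs, tenG, sub_mul, mul_sub, mul_sub, tens_mul, tens_mul, tens_mul, tens_mul,
      tens_eq_zero (M := fun s => facE e t s * facFs z e c i s) t,
      tens_eq_zero (M := fun s => facF z e c t s * facEs z i s) i,
      tens_eq_zero (M := fun s => facF z e c t s * facFs z e c i s) i]
    · simp
    · simp [facF, facFs, hl.not_gt, hl.ne', (h i).z_compr]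
    · simp [facF, facEs, hl.not_gt, hl.ne', (h i).z_one_sub]
    · simp [facE, facFs, hl, (h t).symm.one_sub_z]
  · rw [tenGs, tenG, sub_mul, mul_sub, mul_sub, tens_mul, tens_mul, tens_mul, tens_mul,
      tens_eq_zero (M := fun s => facFs z e c i s * facE e t s) t,
      tens_eq_zero (M := fun s => facEs z i s * facF z e c t s) i,
      tens_eq_zero (M := fun s => facFs z e c i s * facF z e c t s) i, hc]
    · simp
    · simp [facF, facFs, hl.not_gt, hl.ne', (h i).compr_z]
    · simp [facF, facEs, hl.not_gt, hl.ne', (h i).one_sub_z]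
    · simp [facE, facFs, hl, (h t).symm.z_one_sub]

lemma tenG_mul_tenGs_eq (i : Fin m) :
    tenG z e c i * tenGs z e c i = tens (fun s => if s < i then e s else if s = i then
      1 - z s - compr (c s) (z s) (e s) else z s) ∧
    tenGs z e c i * tenG z e c i = tens (fun s => if s < i then e s else if s = i then
      1 - z s - compr (c s) (z s) (e s) else z s) := by
  -- away from the coordinate `i` all four products of factors agree
  have off : ∀ s, s ≠ i →
      facE e i s * facEs z i s = (if s < i then e s else z s) ∧
      facE e i s * facFs z e c i s = (if s < i then e s else z s) ∧
      facF z e c i s * facEs z i s = (if s < i then e s else z s) ∧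
      facF z e c i s * facFs z e c i s = (if s < i then e s else z s) ∧
      facEs z i s * facE e i s = (if s < i then e s else z s) ∧
      facFs z e c i s * facE e i s = (if s < i then e s else z s) ∧
      facEs z i s * facF z e c i s = (if s < i then e s else z s) ∧
      facFs z e c i s * facF z e c i s = (if s < i then e s else z s) := by
    intro s hs
    by_cases hl : s < i <;> simp [facE, facF, facEs, facFs, hs, hl, (h s).zz, (h s).ee]
  set N := 1 - z i - compr (c i) (z i) (e i) with hN
  have hN' : 1 - e i - compr (c i) (e i) (z i) = N := (h i).compr_swap
  have hNN : N * N = N := (h i).resid_sq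
  constructor
  · rw [tenGs, tenG, sub_mul, mul_sub, mul_sub, tens_mul, tens_mul, tens_mul, tens_mul,
      tens_sub_at i (M := fun s => if s < i then e s else if s = i then
        (1 - e s) * (1 - z s - compr (c s) (z s) (e s)) else z s),
      tens_sub_at (M₁ := fun s => facF z e c i s * facEs z i s) i
        (M := fun s => if s < i then e s else if s = i then
        compr (c s) (e s) (z s) * (1 - z s - compr (c s) (z s) (e s)) else z s),
      tens_sub_at i (M := fun s => if s < i then e s else if s = i then
      1 - z s - compr (c s) (z s) (e s) else z s)]
    · intro s hs; simp [hs]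
    · intro s hs; simp [hs]
    · simp only [lt_irrefl, if_true, if_false, ← hN]
      rw [← sub_mul, hN', hNN]
    · intro s hs; simp [off s hs, hs]
    · intro s hs; simp [off s hs, hs]
    · simp [facF, facEs, facFs, mul_sub]
    · intro s hs; simp [off s hs, hs]
    · intro s hs; simp [off s hs, hs]
    · simp [facE, facEs, facFs, mul_sub]
  · rw [tenGs, tenG, sub_mul, mul_sub, mul_sub, tens_mul, tens_mul, tens_mul, tens_mul,
      tens_sub_at i (M := fun s => if s < i then e s else if s = i then
        (1 - z s) * (1 - e s - compr (c s) (e s) (z s)) else z s),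
      tens_sub_at (M₁ := fun s => facFs z e c i s * facE e i s) i
        (M := fun s => if s < i then e s else if s = i then
        compr (c s) (z s) (e s) * (1 - e s - compr (c s) (e s) (z s)) else z s),
      tens_sub_at i (M := fun s => if s < i then e s else if s = i then
      1 - z s - compr (c s) (z s) (e s) else z s)]
    · intro s hs; simp [hs]
    · intro s hs; simp [hs]
    · simp only [lt_irrefl, if_true, if_false, hN']
      rw [← sub_mul, ← hN, hNN]
    · intro s hs; simp [off s hs, hs]
    · intro s hs; simp [off s hs, hs]
    · simp [facE, facF, facFs, mul_sub]
    · intro s hs; simp [off s hs, hs]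
    · intro s hs; simp [off s hs, hs]
    · simp [facE, facEs, facF, mul_sub]

lemma tenG_comm_tenGs (t i : Fin m) :
    tenG z e c t * tenGs z e c i = tenGs z e c i * tenG z e c t := by
  rcases lt_trichotomy i t with hl | rfl | hl
  · rw [(tenG_mul_tenGs_lt h hl).1, (tenG_mul_tenGs_lt h hl).2]
  · rw [(tenG_mul_tenGs_eq h i).1, (tenG_mul_tenGs_eq h i).2]
  · rw [(tenG_mul_tenGs_gt h hl).1, (tenG_mul_tenGs_gt h hl).2]

/-- Both sums are the projection onto the orthogonal complement of the primary module. Each of the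
sums of `E*`, of `E` and of `F* - F` telescopes. -/
lemma sum_tenG_eq : ∑ t, tenG z e c t = ∑ i, tenGs z e c i := by
  let V : ℕ → Matrix (∀ i, α i) (∀ i, α i) ℂ := fun k =>
    tens fun s : Fin m => if (s : ℕ) < k then 1 else z s
  let W : ℕ → Matrix (∀ i, α i) (∀ i, α i) ℂ := fun k =>
    tens fun s : Fin m => if (s : ℕ) < k then e s else 1
  let U : ℕ → Matrix (∀ i, α i) (∀ i, α i) ℂ := fun k =>
    tens fun s : Fin m => if (s : ℕ) < k then e s else z s
  have tele : ∀ Y : ℕ → Matrix (∀ i, α i) (∀ i, α i) ℂ,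
      ∑ i : Fin m, (Y (i + 1) - Y i) = Y m - Y 0 := fun Y => by
    rw [Fin.sum_univ_eq_sum_range (fun k => Y (k + 1) - Y k) m, Finset.sum_range_sub]
  have hlt : ∀ {s i : Fin m}, s ≠ i → ((s : ℕ) < i + 1 ↔ s < i) := fun {s i} hs => by
    rw [Fin.lt_def]; have := Fin.val_ne_of_ne hs; omega
  have hV : ∀ i : Fin m, tens (facEs z i) = V (i + 1) - V i := fun i => by
    refine (tens_sub_at i ?_ ?_ ?_).symm
    · intro s hs; simp [facEs, hs, hlt hs]
    · intro s hs; simp [facEs, hs]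
    · simp [facEs]
  have hW : ∀ i : Fin m, tens (facE e i) = -(W (i + 1) - W i) := fun i => by
    rw [neg_sub]
    refine (tens_sub_at i ?_ ?_ ?_).symm
    · intro s hs; simp [facE, hs]
    · intro s hs; simp [facE, hs, hlt hs]
    · simp [facE]
  have hU : ∀ i : Fin m, tens (facFs z e c i) - tens (facF z e c i) = U (i + 1) - U i := by
    intro i
    rw [tens_sub_at i (M := fun s => if s < i then e s else if s = i then e s - z s else z s),
      tens_sub_at i (M := fun s => if s < i then e s else if s = i then e s - z s else z s)]
    · intro s hs; simp [hs, hlt hs]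
    · intro s hs; simp [hs]
    · simp
    · intro s hs; simp [facFs, hs]
    · intro s hs; simp [facF, hs]
    · have := (h i).compr_swap
      simp only [facF, facFs, lt_irrefl, if_true, if_false]
      rw [← sub_eq_zero] at this ⊢
      rw [← this]
      abel
  have h1 : V m = 1 := by
    simp only [V, Fin.is_lt, if_true]; exact tens_one
  have h2 : W 0 = 1 := by
    simp only [W, Nat.not_lt_zero, if_false]; exact tens_one
  have h3 : W m = U m := by simp [U, W]
  have h4 : V 0 = U 0 := by simp [U, V]
  have : ∑ i, tenGs z e c i - ∑ t, tenG z e c t = 0 := by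
    rw [← Finset.sum_sub_distrib]
    have : ∀ i : Fin m, tenGs z e c i - tenG z e c i =
        (V (i + 1) - V i) + (W (i + 1) - W i) - (U (i + 1) - U i) := fun i => by
      rw [← hU, ← hV, tenGs, tenG, hW]; abel
    rw [Finset.sum_congr rfl fun i _ => this i, Finset.sum_sub_distrib, Finset.sum_add_distrib,
      tele, tele, tele, h1, h2, h3, h4]
    abel
  exact (sub_eq_zero.1 this).symm

end Families

/-! ### Identification of the matrices of the scheme -/

/-- The projection onto `δ_0` on the functions on `ℤ/rℤ`. -/
def zMat (r : ℕ) : Matrix (ZMod r) (ZMod r) ℂ := Matrix.diagonal fun x => if x = 0 then 1 else 0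

/-- The projection `J̃ = J / r` onto the constant functions on `ℤ/rℤ`. -/
def eMat (r : ℕ) : Matrix (ZMod r) (ZMod r) ℂ := Matrix.of fun _ _ => (r : ℂ)⁻¹

section Concrete

lemma one_sub_inv_ne {r : ℕ} (hr : 2 ≤ r) : 1 - (r : ℂ)⁻¹ ≠ 0 := by
  have h1 : (r : ℂ) ≠ 1 := by norm_cast; omega
  rw [sub_ne_zero, ne_comm, Ne, inv_eq_one]
  exact h1

lemma one_sub_zMat (r : ℕ) :
    1 - zMat r = Matrix.diagonal fun x => if x = 0 then (0 : ℂ) else 1 := by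
  rw [zMat, ← Matrix.diagonal_one, Matrix.diagonal_sub]
  congr 1
  funext x
  split_ifs <;> simp

lemma idemPair_mat (r : ℕ) [NeZero r] (hr : 2 ≤ r) : IdemPair (r : ℂ)⁻¹ (zMat r) (eMat r) where
  zz := by simp [zMat]
  ee := by
    ext x y
    have : (r : ℂ) ≠ 0 := NeZero.ne _
    simp [eMat, Matrix.mul_apply, ZMod.card, this]
  zez := by
    ext x y
    simp only [zMat, eMat, Matrix.mul_diagonal, Matrix.diagonal_mul, Matrix.of_apply,
      Matrix.smul_apply, Matrix.diagonal_apply, smul_eq_mul]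
    by_cases hx : x = 0
    · subst hx
      by_cases hy : y = 0
      · subst hy; simp
      · simp [hy, Ne.symm hy]
    · simp [hx]
  eze := by
    ext x y
    rw [zMat, Matrix.mul_apply]
    simp [eMat, Matrix.mul_diagonal]
  hc := one_sub_inv_ne hr

lemma resid_apply (r : ℕ) [NeZero r] (x y : ZMod r) :
    (1 - zMat r - compr (r : ℂ)⁻¹ (zMat r) (eMat r)) x y =
      (if x = y then if x = 0 then 0 else 1 else 0) -
      (1 - (r : ℂ)⁻¹)⁻¹ * ((if x = 0 then 0 else 1) * (r : ℂ)⁻¹ * (if y = 0 then 0 else 1)) := by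
  rw [compr, one_sub_zMat]
  simp only [Matrix.sub_apply, Matrix.smul_apply, Matrix.mul_diagonal, Matrix.diagonal_mul,
    Matrix.diagonal_apply, eMat, Matrix.of_apply, smul_eq_mul]

/-- The residual projection has rank `r - 2`. -/
lemma resid_ne_zero (r : ℕ) [NeZero r] (hr : 2 ≤ r) :
    1 - zMat r - compr (r : ℂ)⁻¹ (zMat r) (eMat r) ≠ 0 ↔ 3 ≤ r := by
  have hr0 : (r : ℂ) ≠ 0 := NeZero.ne _
  constructor
  · intro h
    by_contra hlt
    obtain rfl : r = 2 := by omega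
    apply h
    ext x y
    rw [resid_apply]
    have h1 : ∀ x y : ZMod 2, x ≠ 0 → y ≠ 0 → x = y := by decide
    rw [Matrix.zero_apply]
    by_cases hx : x = 0
    · simp [hx]
    · by_cases hy : y = 0
      · simp [hx, hy]
      · obtain rfl := h1 x y hx hy
        simp only [hx, if_true, if_false]
        norm_num
  · intro h3 h0
    have h1 : (1 : ZMod r) ≠ 0 := by
      have : Fact (1 < r) := ⟨by omega⟩
      exact one_ne_zero
    have h2 : (2 : ZMod r) ≠ 0 := by
      intro h
      have := (ZMod.natCast_eq_zero_iff 2 r).1 (by exact_mod_cast h)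
      have := Nat.le_of_dvd (by norm_num) this
      omega
    have h12 : (1 : ZMod r) ≠ 2 := by
      intro h
      apply h1
      linear_combination -h
    have := congrFun (congrFun h0 1) 2
    rw [resid_apply] at this
    simp [h1, h2, h12, hr0, one_sub_inv_ne hr] at this

variable (m : ℕ) (q : ℕ → ℕ)

/-- The family of the `zMat` of all coordinates. -/
abbrev zFam (s : Fin m) : Matrix (ZMod (q ((s : ℕ) + 1))) (ZMod (q ((s : ℕ) + 1))) ℂ :=
  zMat (q ((s : ℕ) + 1))

/-- The family of the `eMat` of all coordinates. -/
abbrev eFam (s : Fin m) : Matrix (ZMod (q ((s : ℕ) + 1))) (ZMod (q ((s : ℕ) + 1))) ℂ :=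
  eMat (q ((s : ℕ) + 1))

/-- The family of the scalars `1 / q_s`. -/
abbrev cFam (s : Fin m) : ℂ := ((q ((s : ℕ) + 1) : ℕ) : ℂ)⁻¹

lemma idemOne_zero : IdemOne m q 0 = tens (eFam m q) := by
  ext x y
  simp only [IdemOne, tens, eMat, Matrix.of_apply]
  refine Finset.prod_congr rfl fun s _ => ?_
  rw [if_pos (by omega)]

lemma dualIdemOne_zero : DualIdemOne m q 0 = tens (zFam m q) := by
  have : zFam m q = fun s => Matrix.diagonal fun x => if x = 0 then 1 else 0 := rfl
  rw [this, ← tens_diagonal, DualIdemOne]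
  congr 1
  funext y
  simp only [AdjOne, Matrix.of_apply]
  refine Finset.prod_congr rfl fun s _ => ?_
  simp [eq_comm]

lemma idemOne_succ (j : Fin m) :
    IdemOne m q ((j : ℕ) + 1) = tens (facE (eFam m q) (Fin.rev j)) := by
  ext x y
  simp only [IdemOne, tens, Matrix.of_apply]
  refine Finset.prod_congr rfl fun s _ => ?_
  have hj := j.isLt
  have hr := Fin.val_rev j
  rcases lt_trichotomy s (Fin.rev j) with hs | rfl | hs
  · rw [if_pos (by have := Fin.lt_def.1 hs; omega)]
    simp [facE, hs, eMat]
  · rw [if_neg (by omega), if_pos (by omega)]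
    simp [facE, eMat, Matrix.one_apply]
  · have := Fin.lt_def.1 hs
    rw [if_neg (by omega), if_neg (by omega)]
    simp [facE, hs.not_gt, hs.ne', Matrix.one_apply]

lemma dualIdemOne_succ (i : Fin m) :
    DualIdemOne m q ((i : ℕ) + 1) = tens (facEs (zFam m q) i) := by
  have : facEs (zFam m q) i = fun s : Fin m => Matrix.diagonal fun y : ZMod (q ((s : ℕ) + 1)) =>
      if (s : ℕ) + 1 < (i : ℕ) + 1 then (1 : ℂ)
      else if (s : ℕ) + 1 = (i : ℕ) + 1 then (if 0 = y then 0 else 1)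
      else if 0 = y then 1 else 0 := by
    funext s
    rcases lt_trichotomy s i with hs | rfl | hs
    · have := Fin.lt_def.1 hs
      simp [facEs, hs]
    · simp [facEs, one_sub_zMat, eq_comm]
    · have := Fin.lt_def.1 hs
      simp [facEs, hs.not_gt, hs.ne', (Fin.val_ne_of_ne hs.ne'), zMat, eq_comm,
        not_lt.2 this.le]
  rw [this, ← tens_diagonal]
  rfl

variable [∀ i, NeZero (q i)]

lemma fmatStar_succ (hq : ∀ i, 2 ≤ q i) (i : Fin m) :
    FmatStar m q ((i : ℕ) + 1) = tens (facFs (zFam m q) (eFam m q) (cFam m q) i) := by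
  rw [FmatStar, dualIdemOne_succ, idemOne_zero, tens_mul, tens_mul, Fintype.card_pi, valency]
  simp only [Nat.cast_prod, Nat.cast_ite, Nat.cast_one]
  rw [← Finset.prod_div_distrib, tens_smul]
  congr 1
  funext s
  have h := idemPair_mat (q ((s : ℕ) + 1)) (hq _)
  have hq0 : ((q ((s : ℕ) + 1) : ℕ) : ℂ) ≠ 0 := NeZero.ne _
  have hq1 : ((q ((s : ℕ) + 1) : ℕ) : ℂ) - 1 ≠ 0 := by
    rw [sub_ne_zero]; have := hq ((s : ℕ) + 1); norm_cast; omega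
  rw [ZMod.card]
  rcases lt_trichotomy s i with hs | rfl | hs
  · have := Fin.lt_def.1 hs
    simp [facEs, facFs, hs, hq0]
  · simp only [facEs, facFs, lt_irrefl, if_true, if_false]
    rw [compr, Nat.cast_pred (by have := hq ((s : ℕ) + 1); omega)]
    congr 1
    field_simp
  · have := Fin.lt_def.1 hs
    have h1 : ¬ ((s : ℕ) + 1 < i + 1) := by omega
    have h2 : ¬ ((s : ℕ) + 1 = i + 1) := by omega
    simp only [facEs, facFs, hs.not_gt, hs.ne', if_false, h1, h2, h.zez, smul_smul]
    rw [div_one, mul_inv_cancel₀ hq0, one_smul]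

lemma fmat_succ (hq : ∀ i, 2 ≤ q i) (j : Fin m) :
    Fmat m q ((j : ℕ) + 1) = tens (facF (zFam m q) (eFam m q) (cFam m q) (Fin.rev j)) := by
  rw [Fmat, idemOne_succ, dualIdemOne_zero, tens_mul, tens_mul, Fintype.card_pi, multiplicity]
  simp only [Nat.cast_prod, Nat.cast_ite, Nat.cast_one]
  rw [← Finset.prod_div_distrib, tens_smul]
  congr 1
  funext s
  have h := idemPair_mat (q ((s : ℕ) + 1)) (hq _)
  have hq0 : ((q ((s : ℕ) + 1) : ℕ) : ℂ) ≠ 0 := NeZero.ne _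
  have hq1 : ((q ((s : ℕ) + 1) : ℕ) : ℂ) - 1 ≠ 0 := by
    rw [sub_ne_zero]; have := hq ((s : ℕ) + 1); norm_cast; omega
  have hj := j.isLt
  have hr := Fin.val_rev j
  rw [ZMod.card]
  rcases lt_trichotomy s (Fin.rev j) with hs | rfl | hs
  · have := Fin.lt_def.1 hs
    have h1 : ¬ (m - ((j : ℕ) + 1) + 1 < (s : ℕ) + 1) := by omega
    have h2 : ¬ ((s : ℕ) + 1 = m - ((j : ℕ) + 1) + 1) := by omega
    simp only [facE, facF, hs, if_true, if_false, h1, h2, h.eze, smul_smul]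
    rw [div_one, mul_inv_cancel₀ hq0, one_smul]
  · have h1 : ¬ (m - ((j : ℕ) + 1) + 1 < (Fin.rev j : ℕ) + 1) := by omega
    have h2 : ((Fin.rev j : ℕ) + 1 = m - ((j : ℕ) + 1) + 1) := by omega
    rw [if_neg h1, if_pos h2]
    simp only [facE, facF, lt_irrefl, if_true, if_false]
    rw [compr, Nat.cast_pred (by have := hq ((Fin.rev j : ℕ) + 1); omega)]
    congr 1
    field_simp
  · have := Fin.lt_def.1 hs
    have h1 : (m - ((j : ℕ) + 1) + 1 < (s : ℕ) + 1) := by omega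
    simp [facE, facF, hs.not_gt, hs.ne', h1, hq0]

lemma gmat_succ (hq : ∀ i, 2 ≤ q i) (j : Fin m) :
    Gmat m q ((j : ℕ) + 1) = tenG (zFam m q) (eFam m q) (cFam m q) (Fin.rev j) := by
  rw [Gmat, fmat_succ m q hq, idemOne_succ, tenG]

lemma gmatStar_succ (hq : ∀ i, 2 ≤ q i) (i : Fin m) :
    GmatStar m q ((i : ℕ) + 1) = tenGs (zFam m q) (eFam m q) (cFam m q) i := by
  rw [GmatStar, fmatStar_succ m q hq, dualIdemOne_succ, tenGs]

lemma gmat_mul_gmatStar_ne_zero (hq : ∀ i, 2 ≤ q i) (i j : Fin m) :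
    Gmat m q ((j : ℕ) + 1) * GmatStar m q ((i : ℕ) + 1) ≠ 0 ↔
      ((i : ℕ) + 1, (j : ℕ) + 1) ∈ LamSet m q := by
  have h : ∀ s : Fin m, IdemPair (cFam m q s) (zFam m q s) (eFam m q s) :=
    fun s => idemPair_mat _ (hq _)
  have hq0 : ∀ s : Fin m, q ((s : ℕ) + 1) ≠ 0 := fun s => NeZero.ne _
  have hz : ∀ s : Fin m, zFam m q s ≠ 0 := fun s h0 => by
    simpa [zFam, zMat] using congrFun (congrFun h0 0) 0
  have he : ∀ s : Fin m, eFam m q s ≠ 0 := fun s h0 => by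
    simpa [eFam, eMat, hq0] using congrFun (congrFun h0 0) 0
  have h10 : ∀ s : Fin m, (1 : ZMod (q ((s : ℕ) + 1))) ≠ 0 := fun s => by
    have : Fact (1 < q ((s : ℕ) + 1)) := ⟨hq _⟩
    exact one_ne_zero
  have hz' : ∀ s : Fin m, 1 - zFam m q s ≠ 0 := fun s h0 => by
    have := congrFun (congrFun h0 1) 1
    rw [one_sub_zMat] at this
    simp [h10 s] at this
  have he' : ∀ s : Fin m, 1 - eFam m q s ≠ 0 := fun s h0 => by
    simpa [eFam, eMat, h10 s, hq0] using congrFun (congrFun h0 1) 0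
  have hj := j.isLt
  have hi := i.isLt
  have hr := Fin.val_rev j
  have hL : ((i : ℕ) + 1, (j : ℕ) + 1) ∈ LamSet m q ↔
      (Fin.rev j < i ∨ (i = Fin.rev j ∧ 3 ≤ q ((i : ℕ) + 1))) := by
    simp only [LamSet, Finset.mem_filter, Finset.mem_product, Finset.mem_Icc, Fin.lt_def,
      Fin.ext_iff]
    constructor
    · rintro ⟨-, h | h⟩
      · left; omega
      · right; exact ⟨by omega, h.2⟩
    · rintro (h | h)
      · exact ⟨by omega, Or.inl (by omega)⟩
      · exact ⟨by omega, Or.inr ⟨by omega, h.2⟩⟩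
  rw [hL, gmat_succ m q hq, gmatStar_succ m q hq]
  rcases lt_trichotomy i (Fin.rev j) with hl | heq | hl
  · rw [(tenG_mul_tenGs_lt h hl).1]
    simp [hl.not_gt, hl.ne]
  · rw [← heq, (tenG_mul_tenGs_eq h i).1]
    rw [← resid_ne_zero _ (hq ((i : ℕ) + 1))]
    simp only [lt_irrefl, false_or, true_and]
    constructor
    · intro hne h0
      exact hne (tens_eq_zero i (by simpa using h0))
    · intro hne
      refine tens_ne_zero fun s => ?_
      rcases lt_trichotomy s i with hs | rfl | hs
      · simpa [hs] using he s
      · simp only [lt_irrefl, if_true, if_false]; exact hne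
      · simpa [hs.not_gt, hs.ne'] using hz s
  · rw [(tenG_mul_tenGs_gt h hl).1]
    simp only [hl, true_or, iff_true]
    refine tens_ne_zero fun s => ?_
    rcases lt_trichotomy s (Fin.rev j) with hs | hs | hs
    · simpa [facE, facEs, hs, hs.trans hl] using he s
    · subst hs
      simpa [facE, facEs, hl] using he' _
    · rcases lt_trichotomy s i with hs' | rfl | hs'
      · simp [facE, facEs, hs', hs.not_gt, hs.ne']
      · simpa [facE, facEs, hs.not_gt, hs.ne'] using hz' s
      · simpa [facE, facEs, hs.not_gt, hs.ne', hs'.not_gt, hs'.ne'] using hz s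

end Concrete

/-! ### Algebras generated by two commuting families of orthogonal idempotents -/

section Abstract

variable {A κ : Type*} [Ring A] [Algebra ℂ A] [DecidableEq κ]

/-- If `P` and `Q` are families of orthogonal idempotents that commute with each other and have the
same sum, then the nonzero products `P μ * Q lam` are a basis of the algebra generated by `P` and
`Q`. -/
theorem basis_of_idempotents (C : Finset κ) (P Q : κ → A)
    (hP : ∀ a b, P a * P b = if a = b then P a else 0)
    (hQ : ∀ a b, Q a * Q b = if a = b then Q a else 0)
    (hPQ : ∀ a b, P a * Q b = Q b * P a)
    (hsum : ∑ a ∈ C, P a = ∑ a ∈ C, Q a)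
    (O : Finset (κ × κ))
    (hO : ∀ p : κ × κ, p ∈ O ↔ (p.1 ∈ C ∧ p.2 ∈ C) ∧ P p.2 * Q p.1 ≠ 0)
    (S : NonUnitalSubalgebra ℂ A)
    (hS : S = NonUnitalAlgebra.adjoin ℂ {M | ∃ a ∈ C, M = P a ∨ M = Q a}) :
    (∀ x ∈ S, ∀ y ∈ S, x * y = y * x) ∧
    LinearIndependent ℂ (fun p : O => P p.1.2 * Q p.1.1) ∧
    Submodule.span ℂ (Set.range (fun p : O => P p.1.2 * Q p.1.1)) = S.toSubmodule ∧
    Module.finrank ℂ S.toSubmodule = O.card := by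
  set B : O → A := fun p => P p.1.2 * Q p.1.1 with hB
  have hBB : ∀ p p' : O, B p * B p' = if p = p' then B p else 0 := by
    rintro ⟨⟨a, b⟩, h⟩ ⟨⟨a', b'⟩, h'⟩
    have h1 : P b * Q a * (P b' * Q a') = (P b * P b') * (Q a * Q a') := by
      rw [mul_assoc, ← mul_assoc (Q a), ← hPQ, mul_assoc, mul_assoc]
    simp only [hB, h1, hP, hQ, Subtype.mk.injEq, Prod.mk.injEq]
    split_ifs <;> simp_all
  have hli : LinearIndependent ℂ B := by
    rw [Fintype.linearIndependent_iff]
    intro g hg p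
    have h1 := congrArg (· * B p) hg
    simp only [Finset.sum_mul, smul_mul_assoc, hBB, zero_mul, smul_ite, smul_zero,
      Finset.sum_ite_eq', Finset.mem_univ, if_true] at h1
    exact (smul_eq_zero.1 h1).resolve_right ((hO p.1).1 p.2).2
  have hmemB : ∀ a ∈ C, ∀ b ∈ C, P b * Q a ∈ Submodule.span ℂ (Set.range B) := by
    intro a ha b hb
    by_cases h0 : P b * Q a = 0
    · rw [h0]; exact Submodule.zero_mem _
    · exact Submodule.subset_span ⟨⟨(a, b), (hO _).2 ⟨⟨ha, hb⟩, h0⟩⟩, rfl⟩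
  -- multiplying a generator by the common sum expands it in the products
  have hPmem : ∀ a ∈ C, P a ∈ Submodule.span ℂ (Set.range B) := by
    intro a ha
    have h1 : P a * ∑ b ∈ C, P b = P a := by
      simp [Finset.mul_sum, hP, ha]
    rw [← h1, hsum, Finset.mul_sum]
    exact Submodule.sum_mem _ fun b hb => hmemB b hb a ha
  have hQmem : ∀ a ∈ C, Q a ∈ Submodule.span ℂ (Set.range B) := by
    intro a ha
    have h1 : (∑ b ∈ C, Q b) * Q a = Q a := by
      simp [Finset.sum_mul, hQ, ha]
    rw [← h1, ← hsum, Finset.sum_mul]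
    exact Submodule.sum_mem _ fun b hb => hmemB a ha b hb
  have hspan : Submodule.span ℂ (Set.range B) = S.toSubmodule := by
    apply le_antisymm
    · rw [Submodule.span_le]
      rintro _ ⟨p, rfl⟩
      have h1 := ((hO p.1).1 p.2).1
      change P p.1.2 * Q p.1.1 ∈ S
      rw [hS]
      exact mul_mem (NonUnitalAlgebra.subset_adjoin ℂ ⟨_, h1.2, Or.inl rfl⟩)
        (NonUnitalAlgebra.subset_adjoin ℂ ⟨_, h1.1, Or.inr rfl⟩)
    · let T : NonUnitalSubalgebra ℂ A :=
        { Submodule.span ℂ (Set.range B) with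
          mul_mem' := by
            intro x y hx hy
            change x * y ∈ Submodule.span ℂ (Set.range B)
            have hx' : x ∈ Submodule.span ℂ (Set.range B) := hx
            have hy' : y ∈ Submodule.span ℂ (Set.range B) := hy
            have hxy := Submodule.mul_mem_mul hx' hy'
            rw [Submodule.span_mul_span] at hxy
            refine Submodule.span_le.2 ?_ hxy
            rintro _ ⟨_, ⟨p, rfl⟩, _, ⟨p', rfl⟩, rfl⟩
            simp only [hBB]
            split_ifs
            · exact Submodule.subset_span ⟨p, rfl⟩
            · exact Submodule.zero_mem _ }
      have hST : S ≤ T := by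
        rw [hS]
        apply NonUnitalAlgebra.adjoin_le
        rintro M ⟨a, ha, rfl | rfl⟩
        · exact hPmem a ha
        · exact hQmem a ha
      exact fun x hx => hST hx
  refine ⟨?_, hli, hspan, ?_⟩
  · intro x hx y hy
    have hx' : x ∈ Submodule.span ℂ (Set.range B) := by rw [hspan]; exact hx
    have hy' : y ∈ Submodule.span ℂ (Set.range B) := by rw [hspan]; exact hy
    clear hx hy
    induction hx', hy' using Submodule.span_induction₂ with
    | mem_mem x y hx hy =>
      obtain ⟨p, rfl⟩ := hx
      obtain ⟨p', rfl⟩ := hy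
      rw [hBB, hBB]
      split_ifs with h1 h2 h2
      · rw [h1]
      · exact absurd h1.symm h2
      · exact absurd h2.symm h1
      · rfl
    | zero_left => simp
    | zero_right => simp
    | add_left x y z _ _ _ h1 h2 => rw [add_mul, mul_add, h1, h2]
    | add_right x y z _ _ _ h1 h2 => rw [add_mul, mul_add, h1, h2]
    | smul_left r x y _ _ h => rw [smul_mul_assoc, mul_smul_comm, h]
    | smul_right r x y _ _ h => rw [smul_mul_assoc, mul_smul_comm, h]
  · rw [← hspan, finrank_span_eq_card hli, Fintype.card_coe]

end Abstract

/-! ### The matrices `L_τ` of a family of orthogonal idempotents -/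

section Level

variable (m : ℕ) (q : ℕ → ℕ) (n : ℕ)

/-- The functions `f` with `#f⁻¹(j) = τ_j` for every `j`. -/
def fib (τ : Fin m → ℕ) : Finset (Fin n → Fin m) :=
  Finset.univ.filter fun f => ∀ j, (Finset.univ.filter fun i => f i = j).card = τ j

variable {m n}

lemma mem_fib {τ : Fin m → ℕ} {f : Fin n → Fin m} :
    f ∈ fib m n τ ↔ ∀ j, (Finset.univ.filter fun i => f i = j).card = τ j := by
  simp [fib]

lemma Lmat_eq (M : Fin m → Matrix (Vtx m q) (Vtx m q) ℂ) (τ : Fin m → ℕ) :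
    Lmat m q n M τ = ∑ f ∈ fib m n τ, tens fun k => M (f k) := by
  ext x y
  simp only [Lmat, tens, Matrix.of_apply, Matrix.sum_apply]
  refine Finset.sum_congr ?_ fun _ _ => rfl
  ext f
  simp [mem_fib]

lemma sum_Lmat (M : Fin m → Matrix (Vtx m q) (Vtx m q) ℂ) :
    ∑ τ ∈ Ctuples m n, Lmat m q n M τ = tens fun _ : Fin n => ∑ j, M j := by
  have h1 : (tens fun _ : Fin n => ∑ j, M j) = ∑ f : Fin n → Fin m, tens fun k => M (f k) := by
    ext x y
    simp only [tens, Matrix.of_apply, Matrix.sum_apply]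
    rw [Finset.prod_univ_sum, Fintype.piFinset_univ]
  have h2 : ∀ f ∈ (Finset.univ : Finset (Fin n → Fin m)),
      (fun j => (Finset.univ.filter fun i => f i = j).card) ∈ Ctuples m n := by
    intro f _
    simp only [Ctuples, Finset.mem_filter, Fintype.mem_piFinset, Finset.mem_range]
    refine ⟨fun j => Nat.lt_succ_of_le ((Finset.card_filter_le _ _).trans (by simp)), ?_⟩
    rw [← Finset.card_eq_sum_card_fiberwise (fun _ _ => Finset.mem_coe.2 (Finset.mem_univ _))]
    simp
  rw [h1, ← Finset.sum_fiberwise_of_maps_to h2]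
  refine Finset.sum_congr rfl fun τ _ => ?_
  rw [Lmat_eq]
  refine Finset.sum_congr ?_ fun _ _ => rfl
  ext f
  simp [mem_fib, funext_iff]

variable {q} [∀ i, NeZero (q i)]

lemma Lmat_orth {M : Fin m → Matrix (Vtx m q) (Vtx m q) ℂ}
    (hM : ∀ i j, M i * M j = if i = j then M i else 0) (a b : Fin m → ℕ) :
    Lmat m q n M a * Lmat m q n M b = if a = b then Lmat m q n M a else 0 := by
  have h1 : ∀ f g : Fin n → Fin m, (tens fun k => M (f k)) * (tens fun k => M (g k)) =
      if f = g then tens fun k => M (f k) else 0 := by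
    intro f g
    rw [tens_mul]
    by_cases h : f = g
    · subst h; simp [hM]
    · obtain ⟨k, hk⟩ := Function.ne_iff.1 h
      rw [if_neg h, tens_eq_zero k]
      rw [hM, if_neg hk]
  rw [Lmat_eq, Lmat_eq, Finset.sum_mul_sum]
  simp only [h1, Finset.sum_ite_eq]
  split_ifs with hab
  · subst hab
    exact Finset.sum_congr rfl fun f hf => if_pos hf
  · refine Finset.sum_eq_zero fun f hf => if_neg fun hf' => hab ?_
    funext j
    rw [← mem_fib.1 hf j, ← mem_fib.1 hf' j]

lemma Lmat_mul {M N : Fin m → Matrix (Vtx m q) (Vtx m q) ℂ} (a b : Fin m → ℕ) :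
    Lmat m q n M a * Lmat m q n N b =
      ∑ f ∈ fib m n a, ∑ g ∈ fib m n b, tens fun k => M (f k) * N (g k) := by
  rw [Lmat_eq, Lmat_eq, Finset.sum_mul_sum]
  simp only [tens_mul]

lemma Lmat_comm {M N : Fin m → Matrix (Vtx m q) (Vtx m q) ℂ}
    (hMN : ∀ i j, M i * N j = N j * M i) (a b : Fin m → ℕ) :
    Lmat m q n M a * Lmat m q n N b = Lmat m q n N b * Lmat m q n M a := by
  rw [Lmat_mul, Lmat_mul, Finset.sum_comm]
  simp only [hMN]

/-- A function on `Fin n` with prescribed fibre sizes. -/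
lemma exists_fibres {κ : Type*} [Fintype κ] [DecidableEq κ] (c : κ → ℕ) (hc : ∑ p, c p = n) :
    ∃ h : Fin n → κ, ∀ p, (Finset.univ.filter fun k => h k = p).card = c p := by
  have hcard : Fintype.card (Fin n) = Fintype.card (Σ p, Fin (c p)) := by simp [hc]
  let φ := Fintype.equivOfCardEq hcard
  refine ⟨fun k => (φ k).1, fun p => ?_⟩
  have h1 : (Finset.univ.filter fun k => (φ k).1 = p) =
      (Finset.univ.filter fun x : Σ p, Fin (c p) => x.1 = p).map φ.symm.toEmbedding := by
    ext k
    simp [Finset.mem_map_equiv]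
  rw [h1, Finset.card_map, ← Fintype.card_subtype,
    Fintype.card_congr (Equiv.sigmaSubtype p), Fintype.card_fin]

lemma Lmat_mul_ne_zero {M N : Fin m → Matrix (Vtx m q) (Vtx m q) ℂ}
    (hM : ∀ i j, M i * M j = if i = j then M i else 0)
    (hN : ∀ i j, N i * N j = if i = j then N i else 0)
    (hMN : ∀ i j, M i * N j = N j * M i)
    (hL : ∀ i j : Fin m, M j * N i ≠ 0 ↔ ((i : ℕ) + 1, (j : ℕ) + 1) ∈ LamSet m q)
    {lam mu : Fin m → ℕ} (hlam : lam ∈ Ctuples m n) :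
    Lmat m q n M mu * Lmat m q n N lam ≠ 0 ↔ (ThetaSet m q n lam mu).Nonempty := by
  constructor
  · -- a nonzero term of the product gives the matrix of joint fibre sizes
    intro h0
    rw [Lmat_mul] at h0
    obtain ⟨f, hf, h0⟩ := Finset.exists_ne_zero_of_sum_ne_zero h0
    obtain ⟨g, hg, h0⟩ := Finset.exists_ne_zero_of_sum_ne_zero h0
    refine ⟨fun i j => (Finset.univ.filter fun k => g k = i ∧ f k = j).card, ?_⟩
    simp only [ThetaSet, Finset.mem_filter, Fintype.mem_piFinset, Finset.mem_range]
    refine ⟨fun i j => Nat.lt_succ_of_le ((Finset.card_filter_le _ _).trans (by simp)),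
      ?_, ?_, ?_⟩
    · intro i j hij
      rw [Finset.card_eq_zero, Finset.filter_eq_empty_iff]
      rintro k - ⟨rfl, rfl⟩
      have h1 : M (f k) * N (g k) = 0 := not_not.1 (fun h => hij ((hL _ _).1 h))
      exact h0 (tens_eq_zero k h1)
    · intro i
      rw [← mem_fib.1 hg i, Finset.card_eq_sum_card_fiberwise
        (f := f) (t := Finset.univ) (fun _ _ => Finset.mem_coe.2 (Finset.mem_univ _))]
      simp only [Finset.filter_filter]
    · intro j
      rw [← mem_fib.1 hf j, Finset.card_eq_sum_card_fiberwise
        (f := g) (t := Finset.univ) (fun _ _ => Finset.mem_coe.2 (Finset.mem_univ _))]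
      simp only [Finset.filter_filter, and_comm]
  · rintro ⟨c, hc⟩
    simp only [ThetaSet, Finset.mem_filter] at hc
    obtain ⟨-, hsupp, hrow, hcol⟩ := hc
    have hn : ∑ p : Fin m × Fin m, c p.1 p.2 = n := by
      rw [Fintype.sum_prod_type]
      simp only [hrow]
      exact (Finset.mem_filter.1 hlam).2
    obtain ⟨h, hh⟩ := exists_fibres (fun p : Fin m × Fin m => c p.1 p.2) hn
    have hg : (fun k => (h k).1) ∈ fib m n lam := by
      rw [mem_fib]
      intro i
      rw [← hrow i, Finset.card_eq_sum_card_fiberwise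
        (f := fun k => (h k).2) (t := Finset.univ)
        (fun _ _ => Finset.mem_coe.2 (Finset.mem_univ _))]
      refine Finset.sum_congr rfl fun j _ => ?_
      rw [← hh (i, j), Finset.filter_filter]
      simp only [Prod.ext_iff]
    have hf : (fun k => (h k).2) ∈ fib m n mu := by
      rw [mem_fib]
      intro j
      rw [← hcol j, Finset.card_eq_sum_card_fiberwise
        (f := fun k => (h k).1) (t := Finset.univ)
        (fun _ _ => Finset.mem_coe.2 (Finset.mem_univ _))]
      refine Finset.sum_congr rfl fun i _ => ?_
      rw [← hh (i, j), Finset.filter_filter]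
      simp only [Prod.ext_iff, and_comm]
    have hne : (tens fun k => M (h k).2 * N (h k).1) ≠ 0 := by
      refine tens_ne_zero fun k => (hL _ _).2 ?_
      by_contra hk
      have h1 := hsupp _ _ hk
      have h2 := hh (h k)
      rw [h1, Finset.card_eq_zero, Finset.filter_eq_empty_iff] at h2
      exact h2 (Finset.mem_univ k) rfl
    -- multiplying by this idempotent isolates its own term of the product
    intro h0
    apply hne
    have h3 : (tens fun k => M (h k).2 * N (h k).1) *
        (Lmat m q n M mu * Lmat m q n N lam) = tens fun k => M (h k).2 * N (h k).1 := by
      rw [Lmat_mul, Finset.mul_sum, Finset.sum_eq_single _ _ (fun hn => absurd hf hn),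
        Finset.mul_sum, Finset.sum_eq_single _ _ (fun hn => absurd hg hn), tens_mul]
      · congr 1
        funext k
        rw [mul_assoc, ← mul_assoc (N _), ← hMN, mul_assoc, ← mul_assoc, hN, hM]
        simp
      · intro g _ hgne
        obtain ⟨k, hk⟩ := Function.ne_iff.1 hgne
        rw [tens_mul]
        refine tens_eq_zero k ?_
        rw [mul_assoc, ← mul_assoc (N _), ← hMN, mul_assoc, ← mul_assoc, hN, if_neg hk.symm,
          mul_zero]
      · intro f _ hfne
        obtain ⟨k, hk⟩ := Function.ne_iff.1 hfne
        rw [Finset.mul_sum]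
        refine Finset.sum_eq_zero fun g _ => ?_
        rw [tens_mul]
        refine tens_eq_zero k ?_
        rw [mul_assoc, ← mul_assoc (N _), ← hMN, mul_assoc, ← mul_assoc, hM, if_neg hk.symm,
          zero_mul]
    rw [← h3, h0, mul_zero]

end Level

/-- Assume `m ≥ 2` or `q_1 ≥ 3`. The non-unital ℂ-subalgebra of `Mat_{Xⁿ}(ℂ)`
generated by the `L_τ(G_•)` and `L_τ(G*_•)` (`τ ∈ C(m,n)`) is commutative, the
matrices `L_μ(G_•)·L_λ(G*_•)` with `(λ,μ) ∈ Ω(m,n)` form a ℂ-basis of it, and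
its dimension is `|Ω(m,n)|`. -/
theorem stmt17 (m n : ℕ) (hm : 1 ≤ m) (hn : 1 ≤ n) (q : ℕ → ℕ)
    [∀ i, NeZero (q i)] (hq : ∀ i, 2 ≤ q i) (hmq : 2 ≤ m ∨ 3 ≤ q 1) :
    ∀ S : NonUnitalSubalgebra ℂ (Matrix (Fin n → Vtx m q) (Fin n → Vtx m q) ℂ),
      S = NonUnitalAlgebra.adjoin ℂ
            {M | ∃ tau ∈ Ctuples m n,
              M = Lmat m q n (fun j : Fin m => Gmat m q ((j : ℕ) + 1)) tau ∨
              M = Lmat m q n (fun j : Fin m => GmatStar m q ((j : ℕ) + 1)) tau} →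
      (∀ x ∈ S, ∀ y ∈ S, x * y = y * x) ∧
      LinearIndependent ℂ
        (fun p : ↥(OmegaSet m q n) =>
          Lmat m q n (fun j : Fin m => Gmat m q ((j : ℕ) + 1)) p.1.2 *
            Lmat m q n (fun j : Fin m => GmatStar m q ((j : ℕ) + 1)) p.1.1) ∧
      Submodule.span ℂ
          (Set.range (fun p : ↥(OmegaSet m q n) =>
            Lmat m q n (fun j : Fin m => Gmat m q ((j : ℕ) + 1)) p.1.2 *
              Lmat m q n (fun j : Fin m => GmatStar m q ((j : ℕ) + 1)) p.1.1)) =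
        S.toSubmodule ∧
      Module.finrank ℂ ↥S.toSubmodule = (OmegaSet m q n).card := by
  have h : ∀ s : Fin m, IdemPair (cFam m q s) (zFam m q s) (eFam m q s) :=
    fun s => idemPair_mat _ (hq _)
  have hG : ∀ i j : Fin m, Gmat m q ((i : ℕ) + 1) * Gmat m q ((j : ℕ) + 1) =
      if i = j then Gmat m q ((i : ℕ) + 1) else 0 := by
    intro i j
    rw [gmat_succ m q hq, gmat_succ m q hq]
    split_ifs with hij
    · subst hij; exact tenG_sq h _
    · exact tenG_orth h (Fin.rev_injective.ne hij)
  have hGs : ∀ i j : Fin m, GmatStar m q ((i : ℕ) + 1) * GmatStar m q ((j : ℕ) + 1) =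
      if i = j then GmatStar m q ((i : ℕ) + 1) else 0 := by
    intro i j
    rw [gmatStar_succ m q hq, gmatStar_succ m q hq]
    split_ifs with hij
    · subst hij; exact tenGs_sq h _
    · exact tenGs_orth h hij
  have hcomm : ∀ i j : Fin m, Gmat m q ((i : ℕ) + 1) * GmatStar m q ((j : ℕ) + 1) =
      GmatStar m q ((j : ℕ) + 1) * Gmat m q ((i : ℕ) + 1) := by
    intro i j
    rw [gmat_succ m q hq, gmatStar_succ m q hq]
    exact tenG_comm_tenGs h _ _
  have hsum : ∑ j : Fin m, Gmat m q ((j : ℕ) + 1) = ∑ i : Fin m, GmatStar m q ((i : ℕ) + 1) := by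
    simp only [gmat_succ m q hq, gmatStar_succ m q hq]
    rw [← sum_tenG_eq h]
    exact Equiv.sum_comp Fin.revPerm (tenG (zFam m q) (eFam m q) (cFam m q))
  intro S hS
  refine basis_of_idempotents (Ctuples m n) _ _ (Lmat_orth hG) (Lmat_orth hGs)
    (Lmat_comm hcomm) ?_ (OmegaSet m q n) ?_ S hS
  · rw [sum_Lmat, sum_Lmat, hsum]
  · rintro ⟨lam, mu⟩
    rw [OmegaSet, Finset.mem_filter, Finset.mem_product]
    refine and_congr_right fun hp => ?_
    exact (Lmat_mul_ne_zero hG hGs hcomm (gmat_mul_gmatStar_ne_zero m q hq) hp.1).symm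

end OHS

end
end

section
/- For every 0 ≤ i ≤ m and every matrix B in the set {E_0^*E_i, E_iE_0^*, E_0E_i^*, E_i^*E_0, E_iE_0^*E_i, E_i^*E_0E_i^*} ⊆ Mat_X(ℂ), the matrix Σ_{t=1}^n I_X⊗⋯⊗I_X⊗B⊗I_X⊗⋯⊗I_X (the sum over t of the n-fold Kronecker product having B in the t-th factor and the identity I_X in all other factors) belongs to the Terwilliger algebra 𝐓(m,n) of the ordered Hamming scheme 𝔛(m,n). -/
/-!
Write `D(B) = ∑_t I ⊗ ⋯ ⊗ B ⊗ ⋯ ⊗ I`. Operators acting in different tensor factors commute, so `D`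
is a homomorphism of Lie algebras: `[D(B), D(C)] = D([B, C])`. Hence the matrices `B` with
`D(B) ∈ 𝐓(m,n)` form a subspace closed under commutators (`derivSub`, `bracket_mem`).

This subspace contains every `E_i^*` and every `A_i` (`dualIdemOne_mem`, `adjOne_mem`), because the
entries of `D(E_i^*)` and `D(A_i)` depend only on the shape of `y`, respectively of `x - y`. It
also contains `E_i`, which is a linear combination of the `A_j` since its `(x,y)`-entry depends
only on the level of `x - y` (`idemOne_mem`).

The rest is Lie-algebraic (`lie_closure`). Let `P` be an idempotent and `M` a matrix with `PMP = cP`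
and `PM²P = dP`, both in the subspace. Then `[P, M] = PM - MP` and
`[P, [P, M]] = PM + MP - 2cP`, so `PM` and `MP` are in the subspace, and
`[MP, PM] = MPM - dP` puts `MPM` there as well. This applies to `P = E_0^*`, `M = E_i` because
`E_0^*` has a single nonzero entry, and to `P = E_0`, `M = E_i^*` because `E_0` is the
averaging projection.
-/

open Matrix BigOperators

noncomputable section

namespace OHS

variable (m : ℕ) (q : ℕ → ℕ)

variable (n : ℕ)

section Proof

set_option linter.unusedSectionVars false

variable {m : ℕ} {q : ℕ → ℕ} {n : ℕ}

/-! ### Levels and shapes -/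

lemma level_le_iff {v : Vtx m q} {k : ℕ} :
    level m q v ≤ k ↔ ∀ i : Fin m, v i ≠ 0 → (i : ℕ) + 1 ≤ k := by
  simp [level, Finset.sup_le_iff]

lemma level_le (v : Vtx m q) : level m q v ≤ m :=
  level_le_iff.2 fun i _ => i.2

lemma eq_zero_of_level_lt {v : Vtx m q} {i : Fin m} (h : level m q v < (i : ℕ) + 1) : v i = 0 := by
  by_contra hv
  have := level_le_iff.1 le_rfl i hv
  omega

lemma exists_of_level_pos {v : Vtx m q} (h : 0 < level m q v) :
    ∃ i : Fin m, v i ≠ 0 ∧ (i : ℕ) + 1 = level m q v := by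
  have hne : (Finset.univ.filter fun i : Fin m => v i ≠ 0).Nonempty := by
    rw [Finset.nonempty_iff_ne_empty]
    intro h0
    simp [level, h0] at h
  obtain ⟨i, hi, he⟩ := Finset.exists_mem_eq_sup _ hne fun i : Fin m => (i : ℕ) + 1
  exact ⟨i, (Finset.mem_filter.1 hi).2, he.symm⟩

lemma level_eq_zero_iff {v : Vtx m q} : level m q v = 0 ↔ v = 0 := by
  rw [← Nat.le_zero, level_le_iff]
  constructor
  · intro h
    ext i
    by_contra hv
    exact absurd (h i hv) (by omega)
  · rintro rfl i hi
    exact absurd rfl hi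

/-- The entry `(A_j)_{x,y}` indicates whether `x - y` has level `j`. -/
lemma adjOne_apply {j : ℕ} (hj : j ≤ m) (x y : Vtx m q) :
    AdjOne m q j x y = if level m q (x - y) = j then 1 else 0 := by
  simp only [AdjOne, Matrix.of_apply]
  split_ifs with h
  · refine Finset.prod_eq_one fun i _ => ?_
    split_ifs with h1 h2 h3 h4
    · rfl
    · -- the entry at the top position `j` cannot vanish, as `x - y` has level exactly `j`
      exfalso
      obtain ⟨i', hi', he⟩ := exists_of_level_pos (v := x - y) (by omega)
      obtain rfl : i' = i := Fin.ext (by omega)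
      exact hi' (by simp [h3])
    · rfl
    · rfl
    · exact absurd (sub_eq_zero.1 (eq_zero_of_level_lt (v := x - y) (by omega))) h4
  · rcases lt_or_gt_of_ne h with hl | hl
    · refine Finset.prod_eq_zero (Finset.mem_univ (⟨j - 1, by omega⟩ : Fin m)) ?_
      have h0 := eq_zero_of_level_lt (v := x - y) (i := ⟨j - 1, by omega⟩) (by simp; omega)
      rw [if_neg (by simp; omega), if_pos (by simp; omega), if_pos (sub_eq_zero.1 h0)]
    · obtain ⟨i, hi, he⟩ := exists_of_level_pos (v := x - y) (by omega)
      refine Finset.prod_eq_zero (Finset.mem_univ i) ?_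
      rw [if_neg (by omega), if_neg (by omega), if_neg fun h0 => hi (sub_eq_zero.2 h0)]

lemma dualIdemOne_diag {j : ℕ} (hj : j ≤ m) :
    DualIdemOne m q j = Matrix.diagonal fun y => if level m q y = j then 1 else 0 := by
  have h0 : ∀ y : Vtx m q, level m q (0 - y) = level m q y := fun y => by simp [level]
  simp only [DualIdemOne, adjOne_apply hj, h0]

/-- The shape `(λ_0,…,λ_m)` of a vector `x ∈ X^n`. -/
def shape (x : Fin n → Vtx m q) : Fin (m + 1) → ℕ :=
  fun j => (Finset.univ.filter fun i : Fin n => level m q (x i) = (j : ℕ)).card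

lemma hasShape_iff {x : Fin n → Vtx m q} {lam : Fin (m + 1) → ℕ} :
    hasShape m q n x lam ↔ shape x = lam :=
  funext_iff.symm

lemma shape_mem (x : Fin n → Vtx m q) : shape x ∈ ShapeSet m n := by
  have hle : ∀ j, shape x j < n + 1 := fun j =>
    Nat.lt_succ_of_le ((Finset.card_le_univ _).trans_eq (Fintype.card_fin n))
  have hs : ∑ j, shape x j = n := by
    have h := Finset.card_eq_sum_card_fiberwise (s := (Finset.univ : Finset (Fin n)))
      (t := (Finset.univ : Finset (Fin (m + 1))))
      (f := fun i => ⟨level m q (x i), Nat.lt_succ_of_le (level_le _)⟩) (by simp)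
    simpa [shape, Fin.ext_iff] using h.symm
  simp only [ShapeSet, Finset.mem_filter, Fintype.mem_piFinset, Finset.mem_range]
  exact ⟨hle, hs⟩

variable [∀ i, NeZero (q i)]

/-- A matrix whose `(x,y)`-entry depends only on the shape of `x - y` is a combination of
the `𝐀_λ`. -/
lemma of_shape_sub_mem (F : (Fin (m + 1) → ℕ) → ℂ) :
    (Matrix.of fun x y : Fin n → Vtx m q => F (shape fun i => x i - y i)) ∈ TerN m q n := by
  have h : (Matrix.of fun x y : Fin n → Vtx m q => F (shape fun i => x i - y i)) =
      ∑ lam ∈ ShapeSet m n, F lam • AdjN m q n lam := by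
    ext x y
    simp only [Matrix.of_apply, Matrix.sum_apply, Matrix.smul_apply, AdjN, hasShape_iff,
      smul_eq_mul, mul_ite, mul_one, mul_zero]
    rw [Finset.sum_ite_eq, if_pos (shape_mem _)]
  rw [h]
  exact sum_mem fun lam hl =>
    (TerN m q n).smul_mem (by
      unfold TerN
      exact Algebra.subset_adjoin (Or.inl ⟨lam, hl, rfl⟩)) (F lam)

/-- A diagonal matrix whose `(y,y)`-entry depends only on the shape of `y` is a combination of
the `𝐄_λ^*`. -/
lemma diagonal_shape_mem (F : (Fin (m + 1) → ℕ) → ℂ) :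
    (Matrix.diagonal fun y : Fin n → Vtx m q => F (shape y)) ∈ TerN m q n := by
  have h : (Matrix.diagonal fun y : Fin n → Vtx m q => F (shape y)) =
      ∑ lam ∈ ShapeSet m n, F lam • DualIdemN m q n lam := by
    ext x y
    by_cases hxy : x = y
    · subst hxy
      simp only [Matrix.sum_apply, Matrix.smul_apply, DualIdemN, hasShape_iff,
        Matrix.diagonal_apply_eq, smul_eq_mul, mul_ite, mul_one, mul_zero]
      rw [Finset.sum_ite_eq, if_pos (shape_mem _)]
    · simp [Matrix.sum_apply, DualIdemN, hxy]
  rw [h]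
  exact sum_mem fun lam hl =>
    (TerN m q n).smul_mem (by
      unfold TerN
      exact Algebra.subset_adjoin (Or.inr ⟨lam, hl, rfl⟩)) (F lam)

/-! ### The Lie homomorphism `D` -/

/-- `I ⊗ ⋯ ⊗ B ⊗ ⋯ ⊗ I` with `B` in the `t`-th factor. -/
def single (t : Fin n) (B : Matrix (Vtx m q) (Vtx m q) ℂ) :
    Matrix (Fin n → Vtx m q) (Fin n → Vtx m q) ℂ :=
  kron m q n fun s => if s = t then B else 1

lemma single_apply (t : Fin n) (B : Matrix (Vtx m q) (Vtx m q) ℂ) (x y : Fin n → Vtx m q) :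
    single t B x y =
      B (x t) (y t) * ∏ s ∈ Finset.univ.erase t, if x s = y s then (1 : ℂ) else 0 := by
  simp only [single, kron, Matrix.of_apply]
  rw [← Finset.mul_prod_erase _ _ (Finset.mem_univ t), if_pos rfl]
  congr 1
  refine Finset.prod_congr rfl fun s hs => ?_
  rw [if_neg (Finset.ne_of_mem_erase hs), Matrix.one_apply]

lemma kron_mul_kron (M N : Fin n → Matrix (Vtx m q) (Vtx m q) ℂ) :
    kron m q n M * kron m q n N = kron m q n fun s => M s * N s := by
  ext x y
  simp only [kron, Matrix.mul_apply, Matrix.of_apply, ← Finset.prod_mul_distrib]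
  rw [Finset.prod_univ_sum, Fintype.piFinset_univ]

lemma single_mul_single (t : Fin n) (B C : Matrix (Vtx m q) (Vtx m q) ℂ) :
    single t B * single t C = single t (B * C) := by
  simp only [single, kron_mul_kron]
  congr 1
  ext1 s
  split_ifs <;> simp

lemma single_comm {s t : Fin n} (h : s ≠ t) (B C : Matrix (Vtx m q) (Vtx m q) ℂ) :
    single s B * single t C = single t C * single s B := by
  simp only [single, kron_mul_kron]
  congr 1
  ext1 r
  split_ifs with h1 h2
  · exact absurd (h1.symm.trans h2) h
  all_goals simp

/-- `D(B) = ∑_t I ⊗ ⋯ ⊗ B ⊗ ⋯ ⊗ I`, as a linear map. -/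
def tensorDeriv : Matrix (Vtx m q) (Vtx m q) ℂ →ₗ[ℂ]
    Matrix (Fin n → Vtx m q) (Fin n → Vtx m q) ℂ where
  toFun B := ∑ t : Fin n, single t B
  map_add' B C := by
    rw [← Finset.sum_add_distrib]
    refine Finset.sum_congr rfl fun t _ => ?_
    ext x y
    simp [single_apply, add_mul]
  map_smul' c B := by
    rw [Finset.smul_sum]
    refine Finset.sum_congr rfl fun t _ => ?_
    ext x y
    simp [single_apply, mul_assoc]

lemma tensorDeriv_apply (B : Matrix (Vtx m q) (Vtx m q) ℂ) :
    tensorDeriv (n := n) B = ∑ t : Fin n, single t B := rfl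

lemma tensorDeriv_bracket (B C : Matrix (Vtx m q) (Vtx m q) ℂ) :
    tensorDeriv (n := n) (B * C - C * B) =
      tensorDeriv (n := n) B * tensorDeriv (n := n) C -
        tensorDeriv (n := n) C * tensorDeriv (n := n) B := by
  rw [map_sub]
  simp only [tensorDeriv_apply, Finset.sum_mul_sum]
  rw [Finset.sum_comm (f := fun i j : Fin n => single i C * single j B),
    ← Finset.sum_sub_distrib, ← Finset.sum_sub_distrib]
  refine Finset.sum_congr rfl fun t _ => ?_
  rw [← Finset.sum_sub_distrib, Finset.sum_eq_single t]
  · rw [single_mul_single, single_mul_single]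
  · intro s _ hs
    rw [single_comm hs.symm, sub_self]
  · simp

variable (m q n) in
/-- The subspace of matrices `B` with `D(B) ∈ 𝐓(m,n)`. -/
def derivSub : Submodule ℂ (Matrix (Vtx m q) (Vtx m q) ℂ) :=
  (Subalgebra.toSubmodule (TerN m q n)).comap tensorDeriv

lemma mem_derivSub {B : Matrix (Vtx m q) (Vtx m q) ℂ} :
    B ∈ derivSub m q n ↔ tensorDeriv (n := n) B ∈ TerN m q n := Iff.rfl

lemma bracket_mem {B C : Matrix (Vtx m q) (Vtx m q) ℂ} (hB : B ∈ derivSub m q n)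
    (hC : C ∈ derivSub m q n) : B * C - C * B ∈ derivSub m q n := by
  rw [mem_derivSub, tensorDeriv_bracket]
  exact sub_mem (mul_mem hB hC) (mul_mem hC hB)

lemma lie_closure {P M : Matrix (Vtx m q) (Vtx m q) ℂ} {c d : ℂ} (hP : P ∈ derivSub m q n)
    (hM : M ∈ derivSub m q n) (hPP : P * P = P) (hc : P * M * P = c • P)
    (hd : P * M * M * P = d • P) :
    P * M ∈ derivSub m q n ∧ M * P ∈ derivSub m q n ∧ M * P * M ∈ derivSub m q n := by
  have h1 := bracket_mem hP hM
  have h2 := bracket_mem hP h1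
  have e2 : P * (P * M - M * P) - (P * M - M * P) * P = P * M + M * P - (2 * c) • P := by
    have e1 : P * (P * M) = P * M := by rw [← mul_assoc, hPP]
    have e3 : M * P * P = M * P := by rw [mul_assoc, hPP]
    rw [mul_sub, sub_mul, e1, e3, ← mul_assoc, hc, mul_smul, two_smul]
    abel
  rw [e2] at h2
  have h3 : P * M + M * P ∈ derivSub m q n := by
    simpa using add_mem h2 (Submodule.smul_mem _ (2 * c) hP)
  have hPM : P * M ∈ derivSub m q n := by
    have h : P * M = (2⁻¹ : ℂ) • ((P * M + M * P) + (P * M - M * P)) := by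
      rw [show (P * M + M * P) + (P * M - M * P) = (2 : ℂ) • (P * M) by rw [two_smul]; abel,
        smul_smul]
      norm_num
    rw [h]
    exact Submodule.smul_mem _ _ (add_mem h3 h1)
  have hMP : M * P ∈ derivSub m q n := by
    simpa using sub_mem h3 hPM
  refine ⟨hPM, hMP, ?_⟩
  have h4 := bracket_mem hMP hPM
  have e4 : M * P * (P * M) - P * M * (M * P) = M * P * M - d • P := by
    rw [← hd]
    congr 1
    · rw [← mul_assoc, mul_assoc M P P, hPP]
    · simp only [mul_assoc]
  rw [e4] at h4
  simpa using add_mem h4 (Submodule.smul_mem _ d hP)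

/-! ### The matrices `E_i^*`, `A_i` and `E_i` -/

lemma dualIdemOne_mem {j : ℕ} (hj : j ≤ m) : DualIdemOne m q j ∈ derivSub m q n := by
  have h := diagonal_shape_mem (q := q) (n := n)
    fun lam : Fin (m + 1) → ℕ => (lam ⟨j, by omega⟩ : ℂ)
  rw [mem_derivSub]
  convert h using 1
  ext x y
  rw [tensorDeriv_apply, Matrix.sum_apply]
  simp only [single_apply, dualIdemOne_diag hj]
  by_cases hxy : x = y
  · subst hxy
    simp [shape]
  · rw [Matrix.diagonal_apply_ne _ hxy]
    refine Finset.sum_eq_zero fun t _ => ?_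
    obtain ⟨s, hs⟩ := Function.ne_iff.1 hxy
    by_cases hst : s = t
    · subst hst
      rw [Matrix.diagonal_apply_ne _ hs, zero_mul]
    · rw [Finset.prod_eq_zero (Finset.mem_erase.2 ⟨hst, Finset.mem_univ s⟩) (if_neg hs), mul_zero]

/-- The left side counts the positions `t` such that `d` takes the value `j` at `t` and vanishes
elsewhere; there is at most one, and whether it exists is decided by the fibre sizes of `d`. -/
lemma sum_single_indicator (d : Fin n → ℕ) {j : ℕ} (hj : j ≠ 0) :
    ∑ t : Fin n, (if d t = j then (1 : ℂ) else 0) *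
        ∏ s ∈ Finset.univ.erase t, (if d s = 0 then (1 : ℂ) else 0) =
      if (Finset.univ.filter fun i => d i = j).card = 1 ∧
          (Finset.univ.filter fun i => d i = 0).card + 1 = n then 1 else 0 := by
  split_ifs with h
  · obtain ⟨h1, h2⟩ := h
    obtain ⟨t, ht⟩ := Finset.card_eq_one.1 h1
    have hdt : d t = j := by
      have : t ∈ Finset.univ.filter fun i => d i = j := by simp [ht]
      simpa using this
    have hz : (Finset.univ.filter fun i => d i = 0) = Finset.univ.erase t := by
      refine Finset.eq_of_subset_of_card_le (fun s hs => ?_) ?_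
      · rw [Finset.mem_erase]
        refine ⟨?_, Finset.mem_univ s⟩
        rintro rfl
        simp only [Finset.mem_filter, Finset.mem_univ, true_and] at hs
        omega
      · rw [Finset.card_erase_of_mem (Finset.mem_univ t), Finset.card_univ, Fintype.card_fin]
        omega
    rw [Finset.sum_eq_single t]
    · rw [if_pos hdt, one_mul]
      refine Finset.prod_eq_one fun s hs => if_pos ?_
      rw [← hz] at hs
      simpa using hs
    · intro s _ hs
      have h0 : s ∈ Finset.univ.filter fun i => d i = 0 := by simp [hz, hs]
      have h0' : d s = 0 := by simpa using h0
      rw [if_neg (by omega), zero_mul]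
    · simp
  · refine Finset.sum_eq_zero fun t _ => ?_
    by_contra hne
    obtain ⟨ha, hb⟩ := mul_ne_zero_iff.1 hne
    have hdt : d t = j := by
      by_contra h'
      exact ha (if_neg h')
    have hds : ∀ s, s ≠ t → d s = 0 := fun s hs => by
      by_contra h'
      exact hb (Finset.prod_eq_zero (Finset.mem_erase.2 ⟨hs, Finset.mem_univ s⟩) (if_neg h'))
    apply h
    have e1 : (Finset.univ.filter fun i => d i = j) = {t} := by
      ext s
      by_cases hs : s = t
      · simp [hs, hdt]
      · simp [hs, hds s hs, hj.symm]
    have e2 : (Finset.univ.filter fun i => d i = 0) = Finset.univ.erase t := by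
      ext s
      by_cases hs : s = t
      · simp [hs, hdt, hj]
      · simp [hs, hds s hs]
    have hn := t.pos
    rw [e1, e2, Finset.card_erase_of_mem (Finset.mem_univ t), Finset.card_univ, Fintype.card_fin]
    exact ⟨Finset.card_singleton t, by omega⟩

lemma adjOne_mem {j : ℕ} (hj : j ≤ m) : AdjOne m q j ∈ derivSub m q n := by
  rcases Nat.eq_zero_or_pos j with rfl | hpos
  · -- `A_0 = I`, and `D(I) = n I`
    have h1 : AdjOne m q 0 = 1 := by
      ext x y
      simp [adjOne_apply, level_eq_zero_iff, sub_eq_zero, Matrix.one_apply]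
    have h2 : ∀ t : Fin n, single t (1 : Matrix (Vtx m q) (Vtx m q) ℂ) = 1 := fun t => by
      ext x y
      simp only [single, kron, ite_self, Matrix.of_apply, Matrix.one_apply]
      rw [Finset.prod_ite_zero]
      simp [funext_iff]
    rw [h1, mem_derivSub, tensorDeriv_apply]
    exact Subalgebra.sum_mem _ fun t _ => by rw [h2]; exact one_mem _
  · have h := of_shape_sub_mem (q := q) (n := n) fun lam : Fin (m + 1) → ℕ =>
      if lam ⟨j, by omega⟩ = 1 ∧ lam ⟨0, by omega⟩ + 1 = n then (1 : ℂ) else 0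
    rw [mem_derivSub]
    convert h using 1
    ext x y
    rw [tensorDeriv_apply, Matrix.sum_apply]
    have h0 : ∀ s, x s = y s ↔ level m q (x s - y s) = 0 := fun s => by
      rw [level_eq_zero_iff, sub_eq_zero]
    simp only [single_apply, adjOne_apply hj, h0]
    exact sum_single_indicator (fun t => level m q (x t - y t)) (Nat.ne_of_gt hpos)

/-- The `(x,y)`-entry of `E_j` as a function of the level of `x - y`: one replaces the condition
`x i = y i` by the condition which is equivalent to it as long as the level is at most
`m - j + 1`; for larger levels both products vanish. -/
lemma idemOne_apply (j : ℕ) (x y : Vtx m q) :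
    IdemOne m q j x y = ∏ i : Fin m,
      if (i : ℕ) + 1 < m - j + 1 then ((q ((i : ℕ) + 1) : ℂ))⁻¹
      else if (i : ℕ) + 1 = m - j + 1 then
        (if level m q (x - y) ≠ (i : ℕ) + 1 then (1 : ℂ) else 0) - ((q ((i : ℕ) + 1) : ℂ))⁻¹
      else if level m q (x - y) < (i : ℕ) + 1 then 1 else 0 := by
  simp only [IdemOne, Matrix.of_apply]
  by_cases hl : m - j + 1 < level m q (x - y)
  · obtain ⟨i, hi, he⟩ := exists_of_level_pos (v := x - y) (by omega)
    rw [Finset.prod_eq_zero (Finset.mem_univ i), Finset.prod_eq_zero (Finset.mem_univ i)]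
    · rw [if_neg (by omega), if_neg (by omega), if_neg (by omega)]
    · rw [if_neg (by omega), if_neg (by omega), if_neg fun h0 => hi (sub_eq_zero.2 h0)]
  · refine Finset.prod_congr rfl fun i _ => ?_
    by_cases h1 : (i : ℕ) + 1 < m - j + 1
    · simp only [if_pos h1]
    by_cases h2 : (i : ℕ) + 1 = m - j + 1
    · have hiff : x i = y i ↔ level m q (x - y) ≠ (i : ℕ) + 1 := by
        constructor
        · intro hxy he
          obtain ⟨i', hi', he'⟩ := exists_of_level_pos (v := x - y) (by omega)
          obtain rfl : i' = i := Fin.ext (by omega)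
          exact hi' (by simp [hxy])
        · intro hne
          exact sub_eq_zero.1 (eq_zero_of_level_lt (v := x - y) (by omega))
      simp only [if_neg h1, if_pos h2, hiff]
    · have hxy : x i = y i := sub_eq_zero.1 (eq_zero_of_level_lt (v := x - y) (by omega))
      rw [if_neg h1, if_neg h2, if_pos hxy, if_neg h1, if_neg h2, if_pos (by omega)]

lemma idemOne_mem (j : ℕ) : IdemOne m q j ∈ derivSub m q n := by
  have h : IdemOne m q j = ∑ l ∈ Finset.range (m + 1), (∏ i : Fin m,
      if (i : ℕ) + 1 < m - j + 1 then ((q ((i : ℕ) + 1) : ℂ))⁻¹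
      else if (i : ℕ) + 1 = m - j + 1 then
        (if l ≠ (i : ℕ) + 1 then (1 : ℂ) else 0) - ((q ((i : ℕ) + 1) : ℂ))⁻¹
      else if l < (i : ℕ) + 1 then 1 else 0) • AdjOne m q l := by
    ext x y
    rw [idemOne_apply, Matrix.sum_apply, Finset.sum_eq_single (level m q (x - y))]
    · rw [Matrix.smul_apply, adjOne_apply (level_le _), if_pos rfl, smul_eq_mul, mul_one]
    · intro l hl hne
      rw [Matrix.smul_apply, adjOne_apply (Nat.lt_succ_iff.1 (Finset.mem_range.1 hl)),
        if_neg hne.symm, smul_zero]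
    · intro hl
      exact absurd (Finset.mem_range.2 (Nat.lt_succ_of_le (level_le _))) hl
  rw [h]
  exact Submodule.sum_mem _ fun l hl =>
    Submodule.smul_mem _ _ (adjOne_mem (Nat.lt_succ_iff.1 (Finset.mem_range.1 hl)))

/-! ### Compressions by `E_0^*` and by `E_0` -/

lemma dualIdemOne_zero_eq :
    DualIdemOne m q 0 = Matrix.diagonal fun y => if y = 0 then 1 else 0 := by
  simp only [dualIdemOne_diag (Nat.zero_le m), level_eq_zero_iff]

lemma dualIdemOne_zero_compress (M : Matrix (Vtx m q) (Vtx m q) ℂ) :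
    DualIdemOne m q 0 * M * DualIdemOne m q 0 = M 0 0 • DualIdemOne m q 0 := by
  rw [dualIdemOne_zero_eq]
  ext x y
  rw [Matrix.mul_diagonal, Matrix.diagonal_mul, Matrix.smul_apply, Matrix.diagonal_apply]
  by_cases hx : x = 0
  · by_cases hy : y = 0
    · simp [hx, hy]
    · simp [hx, hy, Ne.symm hy]
  · simp [hx]

lemma idemOne_zero_apply (x y : Vtx m q) :
    IdemOne m q 0 x y = ∏ i : Fin m, ((q ((i : ℕ) + 1) : ℂ))⁻¹ := by
  simp only [IdemOne, Matrix.of_apply]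
  exact Finset.prod_congr rfl fun i _ => if_pos (by omega)

lemma idemOne_zero_compress (v : Vtx m q → ℂ) :
    IdemOne m q 0 * Matrix.diagonal v * IdemOne m q 0 =
      ((∏ i : Fin m, ((q ((i : ℕ) + 1) : ℂ))⁻¹) * ∑ x, v x) • IdemOne m q 0 := by
  ext x y
  rw [Matrix.mul_apply, Matrix.smul_apply]
  simp only [Matrix.mul_diagonal, idemOne_zero_apply, smul_eq_mul, Finset.mul_sum, Finset.sum_mul]

lemma idemOne_zero_sq : IdemOne m q 0 * IdemOne m q 0 = IdemOne m q 0 := by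
  have h := idemOne_zero_compress (m := m) (q := q) fun _ => 1
  rw [Matrix.diagonal_one, mul_one] at h
  rw [h]
  convert one_smul ℂ (IdemOne m q 0)
  simp only [Finset.sum_const, Finset.card_univ, Fintype.card_pi, ZMod.card, nsmul_eq_mul, mul_one,
    Nat.cast_prod, ← Finset.prod_mul_distrib]
  exact Finset.prod_eq_one fun i _ => inv_mul_cancel₀ (Nat.cast_ne_zero.2 (NeZero.ne _))

end Proof

/-- For `0 ≤ i ≤ m` and each matrix `B` among `E*_0E_i`, `E_iE*_0`, `E_0E*_i`,
`E*_iE_0`, `E_iE*_0E_i`, `E*_iE_0E*_i`, the sum over `t` of the `n`-fold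
Kronecker products with `B` in the `t`-th factor and identities elsewhere lies
in the Terwilliger algebra `𝐓(m,n)` of `𝔛(m,n)`. -/
theorem stmt19 (m n : ℕ) (hm : 1 ≤ m) (hn : 1 ≤ n) (q : ℕ → ℕ)
    [∀ i, NeZero (q i)] (hq : ∀ i, 2 ≤ q i) :
    ∀ i : ℕ, i ≤ m →
      ∀ B : Matrix (Vtx m q) (Vtx m q) ℂ,
        (B = DualIdemOne m q 0 * IdemOne m q i ∨
          B = IdemOne m q i * DualIdemOne m q 0 ∨
          B = IdemOne m q 0 * DualIdemOne m q i ∨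
          B = DualIdemOne m q i * IdemOne m q 0 ∨
          B = IdemOne m q i * DualIdemOne m q 0 * IdemOne m q i ∨
          B = DualIdemOne m q i * IdemOne m q 0 * DualIdemOne m q i) →
        (∑ t : Fin n, kron m q n (fun s => if s = t then B else 1)) ∈
          TerN m q n := by
  intro i hi B hB
  have hdual := lie_closure (n := n) (dualIdemOne_mem (q := q) (Nat.zero_le m)) (idemOne_mem i)
    (by simp [dualIdemOne_zero_eq])
    (dualIdemOne_zero_compress _)
    ((congrArg (· * _) (mul_assoc _ _ _)).trans (dualIdemOne_zero_compress _))
  have hprim := lie_closure (n := n) (idemOne_mem (m := m) (q := q) 0) (dualIdemOne_mem hi)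
    idemOne_zero_sq (idemOne_zero_compress _)
    ((congrArg (· * _) ((mul_assoc _ _ _).trans
      (congrArg (_ * ·) (Matrix.diagonal_mul_diagonal _ _)))).trans (idemOne_zero_compress _))
  rcases hB with rfl | rfl | rfl | rfl | rfl | rfl
  exacts [hdual.1, hdual.2.1, hprim.1, hprim.2.1, hdual.2.2, hprim.2.2]

end OHS

end
end
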